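/- Let Ω_0, Ω_1 ⊆ ℝ^d be bounded measurable sets of positive Lebesgue measure, and let 𝒰_{Ω_i} denote the uniform probability density |Ω_i|^{−1} 1_{Ω_i}. Call a pair (ρ, v) admissible if ρ : ℝ^d × [0,1] → [0,∞) and v : ℝ^d × [0,1] → ℝ^d are measurable, for a.e. t ∈ [0,1] there are a bounded measurable set E_t of positive measure and a constant c(t) > 0 with ρ(·,t) = c(t)·1_{E_t} a.e. and ∫_{ℝ^d} ρ(x,t) dx = 1 (so ρ(·,t) is a uniform probability density on a bounded set), ∫_0^1 ∫_{ℝ^d} ρ |v|² dx dt < ∞, and for every smooth compactly supported test function q on ℝ^d × [0,1] one has ∫_0^1 ∫_{ℝ^d} ρ (∂_t q + v·∇q) dx dt = ∫ 𝒰_{Ω_1}(x) q(x,1) dx − ∫ 𝒰_{Ω_0}(x) q(x,0) dx. Then the infimum of the action ∫_0^1 ∫_{ℝ^d} ρ |v|² dx dt over all admissible pairs equals d_W(𝒰_{Ω_0} dx, 𝒰_{Ω_1} dx)². -/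

import Mathlib

open Set MeasureTheory
open scoped ENNReal RealInnerProductSpace

/-- The space-time measure: Lebesgue measure on `ℝ^d` times Lebesgue measure
restricted to `[0,1]`. -/
noncomputable def spaceTime (d : ℕ) : Measure (EuclideanSpace ℝ (Fin d) × ℝ) :=
  (volume : Measure (EuclideanSpace ℝ (Fin d))).prod (volume.restrict (Icc (0:ℝ) 1))

/-- Admissibility of a pair `(ρ, v)` for the shape distance without volume constraint:
for a.e. `t ∈ [0,1]` the slice `ρ(·,t)` is (a.e.) a uniform probability density
`c(t)·1_{E_t}` on a bounded measurable set of positive measure, the action is finite, and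
the continuity equation holds weakly with endpoint data the uniform probability densities
`𝒰_{Ω₀}` and `𝒰_{Ω₁}`. -/
def UniformAdmissible {d : ℕ} (Ω₀ Ω₁ : Set (EuclideanSpace ℝ (Fin d)))
    (ρ : EuclideanSpace ℝ (Fin d) → ℝ → ℝ)
    (v : EuclideanSpace ℝ (Fin d) → ℝ → EuclideanSpace ℝ (Fin d)) : Prop :=
  Measurable (fun q : EuclideanSpace ℝ (Fin d) × ℝ => ρ q.1 q.2) ∧
  Measurable (fun q : EuclideanSpace ℝ (Fin d) × ℝ => v q.1 q.2) ∧
  (∀ x t, 0 ≤ ρ x t) ∧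
  (∀ᵐ t ∂(volume.restrict (Icc (0:ℝ) 1)),
    ∃ (E : Set (EuclideanSpace ℝ (Fin d))) (c : ℝ),
      MeasurableSet E ∧ Bornology.IsBounded E ∧ 0 < volume E ∧ 0 < c ∧
      (∀ᵐ x ∂(volume : Measure (EuclideanSpace ℝ (Fin d))),
        ρ x t = c * E.indicator (fun _ => (1:ℝ)) x) ∧
      (∫ x, ρ x t) = 1) ∧
  (∫⁻ q, ENNReal.ofReal (ρ q.1 q.2 * ‖v q.1 q.2‖ ^ 2) ∂(spaceTime d)) < ⊤ ∧
  ∀ q : EuclideanSpace ℝ (Fin d) → ℝ → ℝ,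
    ContDiff ℝ (⊤ : ℕ∞) (fun z : EuclideanSpace ℝ (Fin d) × ℝ => q z.1 z.2) →
    HasCompactSupport (fun z : EuclideanSpace ℝ (Fin d) × ℝ => q z.1 z.2) →
    (∫ t in Icc (0:ℝ) 1, ∫ x, ρ x t *
        (deriv (fun s => q x s) t + ⟪v x t, gradient (fun y => q y t) x⟫)) =
      (volume Ω₁).toReal⁻¹ * (∫ x in Ω₁, q x 1) -
        (volume Ω₀).toReal⁻¹ * (∫ x in Ω₀, q x 0)

/-- The squared quadratic Wasserstein cost between two measures on `ℝ^d`: the infimum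
over couplings of the integral of `|x − y|²`. -/
noncomputable def W2sq {d : ℕ}
    (μ ν : Measure (EuclideanSpace ℝ (Fin d))) : ℝ≥0∞ :=
  sInf { C | ∃ π : Measure (EuclideanSpace ℝ (Fin d) × EuclideanSpace ℝ (Fin d)),
    π.map Prod.fst = μ ∧ π.map Prod.snd = ν ∧
    C = ∫⁻ q, ENNReal.ofReal (‖q.1 - q.2‖ ^ 2) ∂π }

abbrev Eu (d : ℕ) := EuclideanSpace ℝ (Fin d)

lemma split_fderiv {d : ℕ} (q : Eu d → ℝ → ℝ)
    (hq : ContDiff ℝ (⊤ : ℕ∞) (fun z : Eu d × ℝ => q z.1 z.2)) (x w : Eu d) (t : ℝ) :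
    deriv (fun s => q x s) t + ⟪w, gradient (fun y => q y t) x⟫ =
      fderiv ℝ (fun z : Eu d × ℝ => q z.1 z.2) (x, t) (w, 1) := by
  have hd : HasFDerivAt (fun z : Eu d × ℝ => q z.1 z.2)
      (fderiv ℝ (fun z : Eu d × ℝ => q z.1 z.2) (x, t)) (x, t) :=
    ((hq.differentiable (by simp)) (x, t)).hasFDerivAt
  set D := fderiv ℝ (fun z : Eu d × ℝ => q z.1 z.2) (x, t) with hD
  have h1 : HasDerivAt (fun s => q x s) (D (0, 1)) t := by
    have hc : HasDerivAt (fun s : ℝ => ((x, s) : Eu d × ℝ)) ((0 : Eu d), (1 : ℝ)) t :=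
      (hasDerivAt_const t x).prodMk (hasDerivAt_id t)
    exact hd.comp_hasDerivAt t hc
  have h2 : HasFDerivAt (fun y => q y t) (D.comp (ContinuousLinearMap.inl ℝ (Eu d) ℝ)) x := by
    have hc : HasFDerivAt (fun y : Eu d => ((y, t) : Eu d × ℝ))
        (ContinuousLinearMap.inl ℝ (Eu d) ℝ) x := hasFDerivAt_prodMk_left x t
    exact hd.comp x hc
  rw [h1.deriv, gradient, h2.fderiv, real_inner_comm, InnerProductSpace.toDual_symm_apply]
  have : ((w, 1) : Eu d × ℝ) = (0, 1) + (w, 0) := by simp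
  rw [this, map_add]
  simp

/-- Integral comparison without integrability of the smaller function. -/
lemma integral_mono_left_any {α : Type*} [MeasurableSpace α] {μ : Measure α} {f g : α → ℝ}
    (hg : Integrable g μ) (hg0 : 0 ≤ᵐ[μ] g) (hfg : f ≤ᵐ[μ] g) : ∫ a, f a ∂μ ≤ ∫ a, g a ∂μ := by
  by_cases hf : Integrable f μ
  · exact integral_mono_ae hf hg hfg
  · rw [integral_undef hf]; exact integral_nonneg_of_ae hg0

/-- Grid cells. -/
lemma exists_cells {d : ℕ} (Ω : Set (Eu d)) (hb : Bornology.IsBounded Ω) (η : ℝ) (hη : 0 < η) :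
    ∃ (ι : Type) (_ : Fintype ι) (_ : DecidableEq ι) (Q : ι → Set (Eu d)) (x : ι → Eu d),
      (∀ k, MeasurableSet (Q k)) ∧ Pairwise (fun i j => Disjoint (Q i) (Q j)) ∧
      (∀ k, Convex ℝ (Q k)) ∧ (∀ k, x k ∈ Q k) ∧ (∀ k, x k ∈ Ω) ∧
      (∀ k, ∀ y ∈ Q k, ‖y - x k‖ ≤ η) ∧ Ω ⊆ ⋃ k, Q k := by
  classical
  set r : ℝ := η / (d + 1) with hr
  have hd1 : (0 : ℝ) < d + 1 := by positivity
  have hr0 : 0 < r := by positivity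
  let fl : Eu d → (Fin d → ℤ) := fun x i => ⌊x i / r⌋
  obtain ⟨R, hR⟩ := hb.exists_norm_le
  have hfin : (fl '' Ω).Finite := by
    refine (Set.Finite.pi' (ι := Fin d) (κ := fun _ => ℤ)
      (t := fun _ => Set.Icc ⌊-R / r⌋ ⌊R / r⌋) (fun i => Set.finite_Icc _ _)).subset ?_
    rintro _ ⟨x, hx, rfl⟩ i
    have h1 := abs_le.1 ((PiLp.norm_apply_le x i).trans (hR x hx))
    exact ⟨Int.floor_le_floor (by gcongr; exact h1.1), Int.floor_le_floor (by gcongr; exact h1.2)⟩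
  have : Fintype (fl '' Ω) := hfin.fintype
  have hch : ∀ k : (fl '' Ω), ∃ x, x ∈ Ω ∧ fl x = k := fun k => k.2
  choose x hx1 hx2 using hch
  have hcell : ∀ k : Fin d → ℤ, fl ⁻¹' {k} = ⋂ i, {y : Eu d | y i / r ∈ Set.Ico (k i : ℝ) (k i + 1)} := by
    intro k
    ext y
    simp only [Set.mem_preimage, Set.mem_singleton_iff, Set.mem_iInter, Set.mem_ofPred_eq, fl,
      funext_iff, Int.floor_eq_iff, Set.mem_Ico]
  refine ⟨(fl '' Ω), inferInstance, inferInstance, fun k => fl ⁻¹' {k.1}, x, ?_, ?_, ?_, ?_, hx1, ?_, ?_⟩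
  · intro k
    beta_reduce
    rw [hcell]
    refine MeasurableSet.iInter fun i => ?_
    have : Measurable (fun y : Eu d => y i / r) := by fun_prop
    exact this measurableSet_Ico
  · intro i j hij
    refine Disjoint.preimage _ ?_
    simpa using fun h => hij (Subtype.ext h)
  · intro k
    beta_reduce
    rw [hcell]
    refine convex_iInter fun i => ?_
    have h := (convex_Ico (𝕜 := ℝ) ((k.1 i : ℝ)) (k.1 i + 1)).is_linear_preimage
      (f := fun y : Eu d => y i / r) ⟨fun a b => by simp [add_div], fun a b => by simp [mul_div_assoc]⟩
    exact h
  · intro k; exact hx2 k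
  · intro k y hy
    have hyk : fl y = fl (x k) := by rw [hx2]; exact hy
    have hi : ∀ i, |(y - x k) i| ≤ r := by
      intro i
      have := congrFun hyk i
      have h := Int.abs_sub_lt_one_of_floor_eq_floor this
      rw [← sub_div, abs_div, abs_of_pos hr0, div_lt_one hr0] at h
      simpa using h.le
    rw [EuclideanSpace.norm_eq]
    refine Real.sqrt_le_iff.2 ⟨hη.le, ?_⟩
    calc ∑ i, ‖(y - x k) i‖ ^ 2 ≤ ∑ i : Fin d, r ^ 2 := by
          refine Finset.sum_le_sum fun i _ => ?_
          have := hi i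
          rw [Real.norm_eq_abs]; gcongr
      _ = d * r ^ 2 := by simp
      _ ≤ (d + 1) ^ 2 * r ^ 2 := by gcongr; nlinarith [(Nat.cast_nonneg d : (0:ℝ) ≤ d)]
      _ = η ^ 2 := by rw [hr]; field_simp
  · intro y hy
    exact Set.mem_iUnion.2 ⟨⟨fl y, y, hy, rfl⟩, rfl⟩

lemma finite_duality {ι κ : Type} [Fintype ι] [Fintype κ] [DecidableEq ι] [DecidableEq κ]
    (m : ι → ℝ) (n : κ → ℝ) (hm0 : ∀ k, 0 ≤ m k) (hn0 : ∀ l, 0 ≤ n l)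
    (hm : ∑ k, m k = 1) (hn : ∑ l, n l = 1) (c : ι → κ → ℝ) (C : ℝ)
    (H : ∀ (f : ι → ℝ) (g : κ → ℝ), (∀ k l, g l ≤ f k + c k l) →
      ∑ l, n l * g l - ∑ k, m k * f k ≤ C) :
    ∃ p : ι × κ → ℝ, (∀ a, 0 ≤ p a) ∧ (∀ k, ∑ l, p (k, l) = m k) ∧ (∀ l, ∑ k, p (k, l) = n l) ∧
      ∑ k, ∑ l, p (k, l) * c k l ≤ C := by
  classical
  let L : (ι × κ → ℝ) →L[ℝ] (ι → ℝ) × (κ → ℝ) × ℝ :=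
    (ContinuousLinearMap.pi fun k => ∑ l, ContinuousLinearMap.proj (R := ℝ) (k, l)).prod
      ((ContinuousLinearMap.pi fun l => ∑ k, ContinuousLinearMap.proj (R := ℝ) (k, l)).prod
        (∑ k, ∑ l, c k l • ContinuousLinearMap.proj (R := ℝ) (k, l)))
  have hL : ∀ p, L p = (fun k => ∑ l, p (k, l), fun l => ∑ k, p (k, l),
      ∑ k, ∑ l, c k l * p (k, l)) := by
    intro p
    simp only [L]
    ext <;> simp [ContinuousLinearMap.prod_apply]
  let S := L '' stdSimplex ℝ (ι × κ)
  let T : Set ((ι → ℝ) × (κ → ℝ) × ℝ) := {m} ×ˢ {n} ×ˢ Set.Iic C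
  by_cases hd : Disjoint S T
  · exfalso
    obtain ⟨F, u, v, h1, huv, h2⟩ := geometric_hahn_banach_compact_closed (s := S) (t := T)
      ((convex_stdSimplex ℝ _).is_linear_image L.isLinear)
      ((isCompact_stdSimplex ℝ _).image L.continuous)
      ((convex_singleton m).prod ((convex_singleton n).prod (convex_Iic C)))
      (isClosed_singleton.prod (isClosed_singleton.prod isClosed_Iic)) hd
    let α : ι → ℝ := fun k => F (Pi.single k 1, 0, 0)
    let β : κ → ℝ := fun l => F (0, Pi.single l 1, 0)
    let Λ : ℝ := F (0, 0, 1)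
    have hF : ∀ a b r, F (a, b, r) = ∑ k, a k * α k + ∑ l, b l * β l + r * Λ := by
      intro a b r
      have e1 : F (a, 0, 0) = ∑ k, a k * α k := by
        have := LinearMap.pi_apply_eq_sum_univ (F.toLinearMap ∘ₗ LinearMap.inl ℝ _ _) a
        have h : ∀ i : ι, (fun j => if i = j then (1 : ℝ) else 0) = Pi.single i 1 := by
          intro i; ext j; simp [Pi.single_apply, eq_comm]
        simp only [h] at this
        exact this
      have e2 : F (0, b, 0) = ∑ l, b l * β l := by
        have := LinearMap.pi_apply_eq_sum_univ
          (F.toLinearMap ∘ₗ LinearMap.inr ℝ _ _ ∘ₗ LinearMap.inl ℝ _ _) b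
        have h : ∀ i : κ, (fun j => if i = j then (1 : ℝ) else 0) = Pi.single i 1 := by
          intro i; ext j; simp [Pi.single_apply, eq_comm]
        simp only [h] at this
        exact this
      have e3 : F (0, 0, r) = r * Λ := by
        have : ((0 : ι → ℝ), (0 : κ → ℝ), r) = r • ((0 : ι → ℝ), (0 : κ → ℝ), (1 : ℝ)) := by simp
        rw [this, map_smul, smul_eq_mul]
      have : (a, b, r) = (a, (0 : κ → ℝ), (0 : ℝ)) + ((0 : ι → ℝ), b, (0 : ℝ)) +
        ((0 : ι → ℝ), (0 : κ → ℝ), r) := by simp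
      rw [this, map_add, map_add, e1, e2, e3]
    have hS : ∀ k l, α k + β l + c k l * Λ < u := by
      intro k l
      have := h1 _ (mem_image_of_mem L (single_mem_stdSimplex ℝ (k, l)))
      rw [hL, hF] at this
      convert this using 2
      · congr 1
        · rw [Finset.sum_eq_single k]
          · simp [Pi.single_apply]
          · intro b _ hb; simp [Pi.single_apply, hb]
          · simp
        · rw [Finset.sum_eq_single l]
          · simp [Pi.single_apply]
          · intro b _ hb; simp [Pi.single_apply, hb]
          · simp
      · congr 1
        rw [Finset.sum_eq_single k]
        · simp [Pi.single_apply]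
        · intro b _ hb; simp [Pi.single_apply, hb]
        · simp
    have hT : ∀ r ≤ C, u < ∑ k, m k * α k + ∑ l, n l * β l + r * Λ := by
      intro r hr
      rw [← hF]
      exact huv.trans (h2 _ ⟨rfl, rfl, hr⟩)
    set P := ∑ k, m k * α k with hP
    set N := ∑ l, n l * β l with hN
    have hΛ : Λ ≤ 0 := by
      by_contra hpos
      push Not at hpos
      have := hT (min C ((u - P - N) / Λ)) (min_le_left _ _)
      have h3 : min C ((u - P - N) / Λ) * Λ ≤ (u - P - N) / Λ * Λ :=
        mul_le_mul_of_nonneg_right (min_le_right _ _) hpos.le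
      rw [div_mul_cancel₀ _ hpos.ne'] at h3
      linarith
    have hTC := hT C le_rfl
    rcases hΛ.lt_or_eq with hneg | hzero
    · set M := -Λ with hM
      have hMpos : 0 < M := by linarith
      have hΛM : Λ = -M := by simp [hM]
      have := H (fun k => - α k / M) (fun l => (β l - u) / M) (by
        intro k l
        have := hS k l
        rw [hΛM] at this
        rw [div_add' _ _ _ hMpos.ne']
        gcongr
        linarith)
      have e1 : ∑ l, n l * ((β l - u) / M) = (N - u) / M := by
        have hu : N - u = ∑ l, (n l * β l - n l * u) := by
          rw [Finset.sum_sub_distrib, ← Finset.sum_mul, hn, one_mul]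
        rw [hu, Finset.sum_div]
        exact Finset.sum_congr rfl fun l _ => by ring
      have e2 : ∑ k, m k * (- α k / M) = - P / M := by
        rw [hP, ← Finset.sum_neg_distrib, Finset.sum_div]
        exact Finset.sum_congr rfl fun l _ => by ring
      rw [e1, e2, ← sub_div, div_le_iff₀ hMpos] at this
      rw [hΛM] at hTC
      linarith
    · rw [hzero] at hTC
      have hS' : ∀ k l, α k + β l ≤ u := fun k l => by have := hS k l; rw [hzero] at this; linarith
      have : P + N ≤ u := by
        have h3 : ∀ k, α k + N ≤ u := by
          intro k
          have : ∑ l, n l * (α k + β l) ≤ ∑ l, n l * u :=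
            Finset.sum_le_sum fun l _ => mul_le_mul_of_nonneg_left (hS' k l) (hn0 l)
          simp only [mul_add, Finset.sum_add_distrib, ← Finset.sum_mul, hn, one_mul] at this
          exact this
        have : ∑ k, m k * (α k + N) ≤ ∑ k, m k * u :=
            Finset.sum_le_sum fun k _ => mul_le_mul_of_nonneg_left (h3 k) (hm0 k)
        simp only [mul_add, Finset.sum_add_distrib, ← Finset.sum_mul, hm, one_mul] at this
        exact this
      linarith
  · obtain ⟨z, ⟨p, hp, hpz⟩, hz⟩ := Set.not_disjoint_iff.1 hd
    subst hpz
    rw [hL] at hz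
    obtain ⟨h1, h2, h3⟩ := hz
    refine ⟨p, hp.1, fun k => congrFun h1 k, fun l => congrFun h2 l, ?_⟩
    simpa [mul_comm] using h3

lemma exists_monotone_plan {ι κ : Type} [Fintype ι] [Fintype κ] [DecidableEq ι] [DecidableEq κ]
    (m : ι → ℝ) (n : κ → ℝ) (hm : ∑ k, m k = 1) (c : ι → κ → ℝ)
    (p₀ : ι × κ → ℝ) (h0 : ∀ a, 0 ≤ p₀ a) (h1 : ∀ k, ∑ l, p₀ (k, l) = m k)
    (h2 : ∀ l, ∑ k, p₀ (k, l) = n l) :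
    ∃ p : ι × κ → ℝ, (∀ a, 0 ≤ p a) ∧ (∀ k, ∑ l, p (k, l) = m k) ∧ (∀ l, ∑ k, p (k, l) = n l) ∧
      ∑ k, ∑ l, p (k, l) * c k l ≤ ∑ k, ∑ l, p₀ (k, l) * c k l ∧
      ∀ k l k' l', 0 < p (k, l) → 0 < p (k', l') → c k l + c k' l' ≤ c k l' + c k' l := by
  classical
  let P : Set (ι × κ → ℝ) := {p | (∀ a, 0 ≤ p a) ∧ (∀ k, ∑ l, p (k, l) = m k) ∧
    (∀ l, ∑ k, p (k, l) = n l)}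
  have hPc : IsCompact P := by
    refine (isCompact_stdSimplex ℝ (ι × κ)).of_isClosed_subset ?_ ?_
    · have : P = (⋂ a, {p | 0 ≤ p a}) ∩ ((⋂ k, {p | ∑ l, p (k, l) = m k}) ∩
          (⋂ l, {p | ∑ k, p (k, l) = n l})) := by
        ext p; simp [P]
      rw [this]
      refine (isClosed_iInter fun a => isClosed_le (by fun_prop) (by fun_prop)).inter
        ((isClosed_iInter fun a => isClosed_eq (by fun_prop) (by fun_prop)).inter
        (isClosed_iInter fun a => isClosed_eq (by fun_prop) (by fun_prop)))
    · rintro p ⟨a, b, -⟩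
      refine ⟨a, ?_⟩
      rw [Fintype.sum_prod_type]; simp only [b, hm]
  obtain ⟨p, hp, hmin⟩ := hPc.exists_isMinOn (f := fun p => ∑ k, ∑ l, p (k, l) * c k l)
    ⟨p₀, h0, h1, h2⟩ (by fun_prop)
  refine ⟨p, hp.1, hp.2.1, hp.2.2, hmin ⟨h0, h1, h2⟩, ?_⟩
  intro k l k' l' hkl hkl'
  by_cases hk : k = k'
  · subst hk; linarith
  by_cases hl : l = l'
  · subst hl; linarith
  set ε := min (p (k, l)) (p (k', l')) with hε
  have hεpos : 0 < ε := lt_min hkl hkl'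
  let u : ι → ℝ := Pi.single k 1 - Pi.single k' 1
  let w : κ → ℝ := Pi.single l' 1 - Pi.single l 1
  let p' : ι × κ → ℝ := fun a => p a + ε * (u a.1 * w a.2)
  have hu : ∑ a, u a = 0 := by simp [u]
  have hw : ∑ a, w a = 0 := by simp [w]
  have hp' : p' ∈ P := by
    refine ⟨?_, ?_, ?_⟩
    · rintro ⟨a, b⟩
      have ha := hp.1 (a, b)
      have e1 : ε ≤ p (k, l) := min_le_left _ _
      have e2 : ε ≤ p (k', l') := min_le_right _ _
      simp only [p', u, w, Pi.sub_apply, Pi.single_apply]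
      split_ifs <;> subst_vars <;> first | (exfalso; simp_all; done) | nlinarith
    · intro a
      simp only [p', Finset.sum_add_distrib, ← Finset.mul_sum, hw, hp.2.1]
      simp
    · intro a
      simp only [p', Finset.sum_add_distrib, ← Finset.mul_sum, ← Finset.sum_mul, hu, hp.2.2]
      simp
  have := hmin hp'
  simp only [Set.mem_ofPred_eq] at this
  have e : ∑ a, ∑ b, p' (a, b) * c a b = ∑ a, ∑ b, p (a, b) * c a b +
      ε * (c k l' - c k l - c k' l' + c k' l) := by
    simp only [p', add_mul, Finset.sum_add_distrib]
    congr 1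
    have hw2 : ∀ g : κ → ℝ, ∑ b, w b * g b = g l' - g l := by
      intro g; simp [w, sub_mul, Finset.sum_sub_distrib, Pi.single_apply]
    have hu2 : ∀ g : ι → ℝ, ∑ b, u b * g b = g k - g k' := by
      intro g; simp [u, sub_mul, Finset.sum_sub_distrib, Pi.single_apply]
    have : ∀ a, ∑ b, ε * (u a * w b) * c a b = ε * (u a * (c a l' - c a l)) := by
      intro a
      rw [← hw2 (c a), Finset.mul_sum, Finset.mul_sum]
      exact Finset.sum_congr rfl fun b _ => by ring
    rw [Finset.sum_congr rfl fun a _ => this a, ← Finset.mul_sum, hu2 (fun a => c a l' - c a l)]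
    ring
  rw [e] at this
  have h5 : 0 ≤ ε * (c k l' - c k l - c k' l' + c k' l) := by linarith
  have := nonneg_of_mul_nonneg_right h5 hεpos
  linarith

lemma exists_smooth_ramp : ∃ (H : ℝ → ℝ) (κ : ℝ), ContDiff ℝ (⊤ : ℕ∞) H ∧ 0 ≤ κ ∧
    (∀ s, 0 ≤ deriv H s ∧ deriv H s ≤ 1) ∧ (∀ s, 1 ≤ s → H s = 0) ∧ (∀ s, s ≤ 0 → H s = s - κ) ∧
    (∀ s, H s ≤ 0) := by
  let g : ℝ → ℝ := fun u => Real.smoothTransition (1 - u)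
  have hg : ContDiff ℝ (⊤ : ℕ∞) g := Real.smoothTransition.contDiff.comp (by fun_prop)
  have hgc : Continuous g := hg.continuous
  have hg0 : ∀ u, 0 ≤ g u := fun u => Real.smoothTransition.nonneg _
  have hg1 : ∀ u, g u ≤ 1 := fun u => Real.smoothTransition.le_one _
  have hgz : ∀ u, 1 ≤ u → g u = 0 := fun u hu =>
    Real.smoothTransition.zero_of_nonpos (by linarith)
  have hgo : ∀ u, u ≤ 0 → g u = 1 := fun u hu =>
    Real.smoothTransition.one_of_one_le (by linarith)
  let H : ℝ → ℝ := fun s => ∫ u in (1:ℝ)..s, g u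
  have hd : ∀ s, HasDerivAt H (g s) s := fun s =>
    intervalIntegral.integral_hasDerivAt_right (hgc.intervalIntegrable _ _)
      (hgc.stronglyMeasurableAtFilter _ _) hgc.continuousAt
  have hdH : deriv H = g := funext fun s => (hd s).deriv
  have hi : ∀ a b, IntervalIntegrable g volume a b := fun a b => hgc.intervalIntegrable _ _
  refine ⟨H, ∫ u in (0:ℝ)..1, g u, ?_, ?_, ?_, ?_, ?_, ?_⟩
  · refine contDiff_infty_iff_deriv.2 ⟨fun s => (hd s).differentiableAt, ?_⟩
    rw [hdH]; exact hg
  · exact intervalIntegral.integral_nonneg (by norm_num) fun u _ => hg0 u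
  · intro s; rw [hdH]; exact ⟨hg0 s, hg1 s⟩
  · intro s hs
    have : H s = ∫ u in (1:ℝ)..s, (0:ℝ) := by
      refine intervalIntegral.integral_congr fun u hu => ?_
      rw [uIcc_of_le hs] at hu
      exact hgz u hu.1
    simpa using this
  · intro s hs
    have h1 : H s = (∫ u in (1:ℝ)..0, g u) + ∫ u in (0:ℝ)..s, g u :=
      (intervalIntegral.integral_add_adjacent_intervals (hi _ _) (hi _ _)).symm
    have h2 : (∫ u in (0:ℝ)..s, g u) = ∫ u in (0:ℝ)..s, (1:ℝ) := by
      refine intervalIntegral.integral_congr fun u hu => ?_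
      rw [uIcc_of_ge hs] at hu
      exact hgo u hu.2
    rw [h1, h2, intervalIntegral.integral_symm]
    simp; ring
  · intro s
    rcases le_total 1 s with hs | hs
    · have : H s = ∫ u in (1:ℝ)..s, (0:ℝ) := by
        refine intervalIntegral.integral_congr fun u hu => ?_
        rw [uIcc_of_le hs] at hu
        exact hgz u hu.1
      simp [this]
    · have : H s = - ∫ u in s..1, g u := intervalIntegral.integral_symm _ _
      rw [this]
      have := intervalIntegral.integral_nonneg (μ := volume) hs fun u _ => hg0 u
      linarith

lemma exists_smooth_clock (δ : ℝ) (hδ : 0 < δ) : ∃ β : ℝ → ℝ, ContDiff ℝ (⊤ : ℕ∞) β ∧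
    (∀ t, 0 < β t) ∧ (∀ t, 0 ≤ t → β t = t + δ) := by
  obtain ⟨H, κ, h1, h2, -, -, h5, h6⟩ := exists_smooth_ramp
  have hκ : 0 < 1 + κ := by linarith
  set a := δ / (1 + κ) with ha
  have ha0 : 0 < a := by positivity
  have hak : a * (1 + κ) = δ := by rw [ha]; field_simp
  refine ⟨fun t => a * (1 - H (-t / a)), ?_, ?_, ?_⟩
  · exact contDiff_const.mul (contDiff_const.sub (h1.comp (by fun_prop)))
  · intro t
    have := h6 (-t / a)
    have : 0 < 1 - H (-t / a) := by linarith
    positivity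
  · intro t ht
    have : -t / a ≤ 0 := div_nonpos_of_nonpos_of_nonneg (by linarith) ha0.le
    beta_reduce
    rw [h5 _ this]
    have : a * (-t / a) = -t := by field_simp
    linear_combination hak - this

/-- soft minimum of the functions `f k + |x - x_k|^2 / (2 b)` -/
noncomputable def softHL {d : ℕ} {ι : Type} [Fintype ι] (x : ι → Eu d) (f : ι → ℝ) (ε : ℝ)
    (y : Eu d) (b : ℝ) : ℝ :=
  -ε * Real.log (∑ k, Real.exp (-(f k + ‖y - x k‖ ^ 2 / (2 * b)) / ε))

lemma softHL_le {d : ℕ} {ι : Type} [Fintype ι] (x : ι → Eu d) (f : ι → ℝ) (ε : ℝ) (hε : 0 < ε)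
    (y : Eu d) (b : ℝ) (k : ι) : softHL x f ε y b ≤ f k + ‖y - x k‖ ^ 2 / (2 * b) := by
  unfold softHL
  have h1 : Real.exp (-(f k + ‖y - x k‖ ^ 2 / (2 * b)) / ε) ≤
      ∑ k, Real.exp (-(f k + ‖y - x k‖ ^ 2 / (2 * b)) / ε) :=
    Finset.single_le_sum (f := fun k => Real.exp (-(f k + ‖y - x k‖ ^ 2 / (2 * b)) / ε))
      (fun i _ => (Real.exp_pos _).le) (Finset.mem_univ k)
  have h2 := Real.log_le_log (Real.exp_pos _) h1
  rw [Real.log_exp, div_le_iff₀ hε] at h2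
  linarith

lemma le_softHL {d : ℕ} {ι : Type} [Fintype ι] [Nonempty ι] (x : ι → Eu d) (f : ι → ℝ) (ε : ℝ)
    (hε : 0 < ε) (y : Eu d) (b g : ℝ) (h : ∀ k, g ≤ f k + ‖y - x k‖ ^ 2 / (2 * b)) :
    g - ε * Real.log (Fintype.card ι) ≤ softHL x f ε y b := by
  unfold softHL
  have h1 : ∑ k, Real.exp (-(f k + ‖y - x k‖ ^ 2 / (2 * b)) / ε) ≤
      Fintype.card ι * Real.exp (-g / ε) := by
    calc _ ≤ ∑ k : ι, Real.exp (-g / ε) := by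
          refine Finset.sum_le_sum fun k _ => Real.exp_le_exp.2 ?_
          gcongr
          exact h k
      _ = _ := by simp
  have hpos : 0 < ∑ k, Real.exp (-(f k + ‖y - x k‖ ^ 2 / (2 * b)) / ε) :=
    Finset.sum_pos (fun i _ => Real.exp_pos _) Finset.univ_nonempty
  have h2 := Real.log_le_log hpos h1
  have hc : (0:ℝ) < Fintype.card ι := by exact_mod_cast Fintype.card_pos
  rw [Real.log_mul hc.ne' (Real.exp_pos _).ne', Real.log_exp] at h2
  have h3 := mul_le_mul_of_nonneg_left h2 hε.le
  have : ε * (-g / ε) = -g := by field_simp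
  nlinarith

lemma contDiff_softHL {d : ℕ} {ι : Type} [Fintype ι] [Nonempty ι] (x : ι → Eu d) (f : ι → ℝ)
    (ε : ℝ) (β : ℝ → ℝ) (hβ : ContDiff ℝ (⊤ : ℕ∞) β) (hβ0 : ∀ t, 0 < β t) :
    ContDiff ℝ (⊤ : ℕ∞) (fun z : Eu d × ℝ => softHL x f ε z.1 (β z.2)) := by
  unfold softHL
  refine contDiff_const.mul (ContDiff.log ?_ ?_)
  · refine ContDiff.sum fun k _ => ContDiff.exp ?_
    refine ContDiff.div_const (ContDiff.neg (contDiff_const.add (ContDiff.div ?_ ?_ ?_))) _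
    · exact (contDiff_fst.sub contDiff_const).norm_sq ℝ
    · exact contDiff_const.mul (hβ.comp contDiff_snd)
    · intro z; have := hβ0 z.2; positivity
  · intro z
    exact (Finset.sum_pos (fun i _ => Real.exp_pos _) Finset.univ_nonempty).ne'

lemma deriv_softHL {d : ℕ} {ι : Type} [Fintype ι] [Nonempty ι] (x : ι → Eu d) (f : ι → ℝ)
    (ε : ℝ) (hε : 0 < ε) (β : ℝ → ℝ) (hβ0 : ∀ t, 0 < β t) (δ : ℝ)
    (hβ1 : ∀ t, 0 ≤ t → β t = t + δ) (y w : Eu d) (t : ℝ) (ht : 0 < t) :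
    ∃ D, HasDerivAt (fun s : ℝ => softHL x f ε (y + s • w) (β (t + s))) D 0 ∧ D ≤ ‖w‖ ^ 2 / 2 := by
  have hβd : HasDerivAt (fun s : ℝ => β (t + s)) 1 0 := by
    have h1 : HasDerivAt (fun s : ℝ => t + s + δ) 1 0 := by
      simpa using ((hasDerivAt_id (0:ℝ)).const_add t).add_const δ
    refine h1.congr_of_eventuallyEq ?_
    filter_upwards [Ioi_mem_nhds (show -t < 0 by linarith)] with s hs
    exact hβ1 _ (by have := mem_Ioi.1 hs; linarith)
  let b := β t
  have hb : 0 < b := hβ0 t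
  let e : ι → ℝ := fun k => Real.exp (-(f k + ‖y - x k‖ ^ 2 / (2 * b)) / ε)
  let D1 : ι → ℝ := fun k => ⟪y - x k, w⟫ / b - ‖y - x k‖ ^ 2 / (2 * b ^ 2)
  have hD1 : ∀ k, D1 k ≤ ‖w‖ ^ 2 / 2 := by
    intro k
    have h0 : 0 ≤ ‖(b⁻¹) • (y - x k) - w‖ ^ 2 := by positivity
    rw [norm_sub_sq_real, norm_smul, inner_smul_left] at h0
    simp only [Real.norm_eq_abs, abs_inv, abs_of_pos hb, mul_pow, conj_trivial] at h0
    have e1 : D1 k = (2 * (b⁻¹ * ⟪y - x k, w⟫) - (b⁻¹)^2 * ‖y - x k‖ ^ 2) / 2 := by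
      simp only [D1]; field_simp
    rw [e1]; gcongr; linarith
  have hu : ∀ k, HasDerivAt (fun s : ℝ => f k + ‖y + s • w - x k‖ ^ 2 / (2 * β (t + s))) (D1 k) 0 := by
    intro k
    have h1 : HasDerivAt (fun s : ℝ => y + s • w - x k) w 0 := by
      simpa using (((hasDerivAt_id (0:ℝ)).smul_const w).const_add y).sub_const (x k)
    have h2 := h1.norm_sq
    have h3 := (h2.div (hβd.const_mul 2) (by simpa using hb.ne')).const_add (f k)
    refine h3.congr_deriv ?_
    simp only [D1, zero_smul, add_zero]
    change (2 * ⟪y - x k, w⟫ * (2 * b) - _) / (2 * b) ^ 2 = _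
    field_simp
  have hS : HasDerivAt (fun s : ℝ => ∑ k, Real.exp (-(f k + ‖y + s • w - x k‖ ^ 2 / (2 * β (t + s))) / ε))
      (∑ k, e k * (- D1 k / ε)) 0 := by
    refine HasDerivAt.fun_sum fun k _ => ?_
    have := (((hu k).neg).div_const ε).exp
    refine this.congr_deriv ?_
    simp [e, b]
  have hpos : 0 < ∑ k, e k :=
    Finset.sum_pos (fun i _ => Real.exp_pos _) Finset.univ_nonempty
  have e0 : (∑ k, Real.exp (-(f k + ‖y + (0:ℝ) • w - x k‖ ^ 2 / (2 * β (t + 0))) / ε)) = ∑ k, e k := by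
    simp [e, b]
  have hlog := (hS.log (by rw [e0]; exact hpos.ne')).const_mul (-ε)
  refine ⟨_, hlog, ?_⟩
  rw [e0, mul_div_assoc', div_le_iff₀ hpos]
  calc -ε * ∑ k, e k * (-D1 k / ε) = ∑ k, e k * D1 k := by
        rw [Finset.mul_sum]; exact Finset.sum_congr rfl fun k _ => by field_simp
    _ ≤ ∑ k, e k * (‖w‖ ^ 2 / 2) :=
        Finset.sum_le_sum fun k _ => mul_le_mul_of_nonneg_left (hD1 k) (Real.exp_pos _).le
    _ = ‖w‖ ^ 2 / 2 * ∑ k, e k := by rw [← Finset.sum_mul, mul_comm]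

lemma action_bound {d : ℕ} {Ω₀ Ω₁ : Set (Eu d)} {ρ : Eu d → ℝ → ℝ} {v : Eu d → ℝ → Eu d}
    (hadm : UniformAdmissible Ω₀ Ω₁ ρ v) (q : Eu d → ℝ → ℝ)
    (hq : ContDiff ℝ (⊤ : ℕ∞) (fun z : Eu d × ℝ => q z.1 z.2))
    (hqc : HasCompactSupport (fun z : Eu d × ℝ => q z.1 z.2))
    (hsub : ∀ (x w : Eu d) (t : ℝ), t ∈ Ioo (0:ℝ) 1 →
      fderiv ℝ (fun z : Eu d × ℝ => q z.1 z.2) (x, t) (w, 1) ≤ ‖w‖ ^ 2 / 2) :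
    (volume Ω₁).toReal⁻¹ * (∫ x in Ω₁, q x 1) - (volume Ω₀).toReal⁻¹ * (∫ x in Ω₀, q x 0) ≤
      (∫⁻ q, ENNReal.ofReal (ρ q.1 q.2 * ‖v q.1 q.2‖ ^ 2) ∂(spaceTime d)).toReal / 2 := by
  obtain ⟨hρm, hvm, hρ0, -, hA, hweak⟩ := hadm
  rw [← hweak q hq hqc]
  let G : Eu d × ℝ → ℝ := fun z => ρ z.1 z.2 * ‖v z.1 z.2‖ ^ 2
  have hG0 : ∀ z, 0 ≤ G z := fun z => mul_nonneg (hρ0 _ _) (by positivity)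
  have hGm : Measurable G := hρm.mul (hvm.norm.pow_const 2)
  have hGi : Integrable G (spaceTime d) := by
    refine ⟨hGm.aestronglyMeasurable, ?_⟩
    rw [hasFiniteIntegral_iff_ofReal (Filter.Eventually.of_forall hG0)]
    exact hA
  have hGint : (∫⁻ q, ENNReal.ofReal (ρ q.1 q.2 * ‖v q.1 q.2‖ ^ 2) ∂(spaceTime d)).toReal =
      ∫ z, G z ∂(spaceTime d) :=
    (integral_eq_lintegral_of_nonneg_ae (Filter.Eventually.of_forall hG0)
      hGm.aestronglyMeasurable).symm
  rw [hGint, ← integral_div]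
  have hG2 : Integrable (fun z => G z / 2) (spaceTime d) := hGi.div_const 2
  rw [spaceTime] at hG2 ⊢
  rw [integral_prod_symm _ hG2]
  refine integral_mono_left_any hG2.integral_prod_right ?_ ?_
  · exact Filter.Eventually.of_forall fun t => integral_nonneg fun x => by
      have := hG0 (x, t); positivity
  · have hIoo : ∀ᵐ t ∂(volume.restrict (Icc (0:ℝ) 1)), t ∈ Ioo (0:ℝ) 1 := by
      rw [← restrict_Ioo_eq_restrict_Icc]
      exact ae_restrict_mem measurableSet_Ioo
    filter_upwards [hIoo, hG2.prod_left_ae] with t ht hGt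
    refine integral_mono_left_any hGt ?_ ?_
    · exact Filter.Eventually.of_forall fun x => by have := hG0 (x, t); simp only [Pi.zero_apply]; positivity
    · refine Filter.Eventually.of_forall fun x => ?_
      have h1 := hsub x (v x t) t ht
      rw [← split_fderiv q hq] at h1
      have := mul_le_mul_of_nonneg_left h1 (hρ0 x t)
      simp only [G]
      linarith

lemma hopf_bound {d : ℕ} {Ω₀ Ω₁ : Set (Eu d)} {ρ : Eu d → ℝ → ℝ} {v : Eu d → ℝ → Eu d}
    (hadm : UniformAdmissible Ω₀ Ω₁ ρ v)
    (h₀meas : MeasurableSet Ω₀) (h₁meas : MeasurableSet Ω₁)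
    (h₀bdd : Bornology.IsBounded Ω₀) (h₁bdd : Bornology.IsBounded Ω₁)
    (h₀pos : 0 < volume Ω₀) (h₁pos : 0 < volume Ω₁)
    {ι : Type} [Fintype ι] [Nonempty ι] (x : ι → Eu d) (f : ι → ℝ) (ε δ : ℝ) (hε : 0 < ε)
    (hδ : 0 < δ) :
    (volume Ω₁).toReal⁻¹ * (∫ y in Ω₁, softHL x f ε y (1 + δ)) -
      (volume Ω₀).toReal⁻¹ * (∫ y in Ω₀, softHL x f ε y δ) ≤
      (∫⁻ q, ENNReal.ofReal (ρ q.1 q.2 * ‖v q.1 q.2‖ ^ 2) ∂(spaceTime d)).toReal / 2 := by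
  obtain ⟨H, κ, hH, hκ, hHd, hH1, hH0, -⟩ := exists_smooth_ramp
  obtain ⟨β, hβ, hβ0, hβ1⟩ := exists_smooth_clock δ hδ
  let θ : ContDiffBump (1/2 : ℝ) := ⟨1, 2, by norm_num, by norm_num⟩
  have hθ1 : ∀ t ∈ Icc (-1/2 : ℝ) (3/2), θ t = 1 := by
    intro t ht
    refine θ.one_of_mem_closedBall ?_
    rw [Real.closedBall_eq_Icc]
    constructor <;> simp only [θ] <;> linarith [ht.1, ht.2]
  have hθ0 : ∀ t, t ∉ Icc (-2 : ℝ) 3 → θ t = 0 := by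
    intro t ht
    refine θ.zero_of_le_dist ?_
    simp only [θ, Real.dist_eq]
    by_contra hlt
    push Not at hlt
    rw [abs_lt] at hlt
    exact ht ⟨by linarith, by linarith⟩
  let Φ : Eu d × ℝ → ℝ := fun z => softHL x f ε z.1 (β z.2)
  have hΦ : ContDiff ℝ (⊤ : ℕ∞) Φ := contDiff_softHL x f ε β hβ hβ0
  obtain ⟨R, hR⟩ := (h₀bdd.union h₁bdd).exists_norm_le
  obtain ⟨M, hM⟩ : ∃ M, ∀ z ∈ Metric.closedBall (0 : Eu d) R ×ˢ Icc (0:ℝ) 1, Φ z ≤ M := by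
    obtain ⟨M, hM⟩ := ((isCompact_closedBall (0 : Eu d) R).prod
      (isCompact_Icc (a := (0:ℝ)) (b := 1))).bddAbove_image hΦ.continuous.continuousOn
    exact ⟨M, fun z hz => hM (mem_image_of_mem _ hz)⟩
  let q : Eu d → ℝ → ℝ := fun y t => θ t * H (Φ (y, t) - M)
  have hq : ContDiff ℝ (⊤ : ℕ∞) (fun z : Eu d × ℝ => q z.1 z.2) := by
    refine ContDiff.mul ?_ ?_
    · exact θ.contDiff.comp contDiff_snd
    · exact hH.comp (hΦ.sub contDiff_const)
  have hqc : HasCompactSupport (fun z : Eu d × ℝ => q z.1 z.2) := by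
    obtain ⟨B, hB⟩ := (isCompact_Icc (a := (-2:ℝ)) (b := 3)).bddAbove_image hβ.continuous.continuousOn
    have hB' : ∀ t ∈ Icc (-2:ℝ) 3, β t ≤ B := fun t ht => hB (mem_image_of_mem _ ht)
    have hBpos : 0 < B := (hβ0 0).trans_le (hB' 0 (by norm_num))
    set T : ℝ := |M + 1 + ε * Real.log (Fintype.card ι)| + ∑ k, |f k| with hT
    have hT0 : 0 ≤ T := by positivity
    set S : ℝ := 1 + 2 * B * T with hS
    have hS1 : 1 ≤ S := by have : 0 ≤ 2 * B * T := by positivity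
                           linarith
    refine HasCompactSupport.intro ((isCompact_closedBall (0 : Eu d) (∑ k, ‖x k‖ + S)).prod
      (isCompact_Icc (a := (-2:ℝ)) (b := 3))) ?_
    rintro ⟨y, t⟩ hz
    simp only [q]
    by_cases ht : t ∈ Icc (-2:ℝ) 3
    · have hy : ∑ k, ‖x k‖ + S < ‖y‖ := by
        by_contra hle
        push Not at hle
        exact hz ⟨by simpa using hle, ht⟩
      rw [hH1, mul_zero]
      have := le_softHL x f ε hε y (β t) (M + 1 + ε * Real.log (Fintype.card ι)) (by
        intro k
        have hk : ‖x k‖ ≤ ∑ k, ‖x k‖ :=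
          Finset.single_le_sum (f := fun k => ‖x k‖) (fun i _ => norm_nonneg _) (Finset.mem_univ k)
        have hfk : |f k| ≤ ∑ k, |f k| :=
          Finset.single_le_sum (f := fun k => |f k|) (fun i _ => abs_nonneg _) (Finset.mem_univ k)
        have h1 : S ≤ ‖y - x k‖ := by have := norm_sub_norm_le y (x k); linarith
        have h2 : T ≤ ‖y - x k‖ ^ 2 / (2 * β t) := by
          rw [le_div_iff₀ (by have := hβ0 t; positivity)]
          calc T * (2 * β t) ≤ T * (2 * B) := by gcongr; exact hB' t ht
            _ ≤ S := by rw [hS]; linarith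
            _ ≤ S ^ 2 := by nlinarith
            _ ≤ _ := by gcongr
        have h3 := neg_abs_le (f k)
        have h4 := le_abs_self (M + 1 + ε * Real.log (Fintype.card ι))
        linarith)
      simp only [Φ]
      linarith
    · rw [hθ0 t ht, zero_mul]
  have hsub : ∀ (y w : Eu d) (t : ℝ), t ∈ Ioo (0:ℝ) 1 →
      fderiv ℝ (fun z : Eu d × ℝ => q z.1 z.2) (y, t) (w, 1) ≤ ‖w‖ ^ 2 / 2 := by
    intro y w t ht
    obtain ⟨D, hD, hDle⟩ := deriv_softHL x f ε hε β hβ0 δ hβ1 y w t ht.1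
    have hline : HasDerivAt (fun s : ℝ => ((y + s • w, t + s) : Eu d × ℝ)) (w, 1) 0 := by
      refine HasDerivAt.prodMk ?_ ?_
      · simpa using ((hasDerivAt_id (0:ℝ)).smul_const w).const_add y
      · simpa using (hasDerivAt_id (0:ℝ)).const_add t
    have hqd : HasFDerivAt (fun z : Eu d × ℝ => q z.1 z.2)
        (fderiv ℝ (fun z : Eu d × ℝ => q z.1 z.2) (y, t)) (y + (0:ℝ) • w, t + 0) := by
      simpa using ((hq.differentiable (by simp)) (y, t)).hasFDerivAt
    have h1 := hqd.comp_hasDerivAt (0:ℝ) hline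
    have hHd' : HasDerivAt H (deriv H (Φ (y, t) - M)) (softHL x f ε (y + (0:ℝ) • w) (β (t + 0)) - M) := by
      simpa [Φ] using ((hH.differentiable (by simp)) (Φ (y, t) - M)).hasDerivAt
    have h2 := hHd'.comp (0:ℝ) (hD.sub_const M)
    have h3 : HasDerivAt ((fun z : Eu d × ℝ => q z.1 z.2) ∘ fun s : ℝ => ((y + s • w, t + s) : Eu d × ℝ))
        (deriv H (Φ (y, t) - M) * D) 0 := by
      refine h2.congr_of_eventuallyEq ?_
      have hn : ∀ᶠ s in nhds (0:ℝ), t + s ∈ Icc (-1/2 : ℝ) (3/2) := by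
        have : ContinuousAt (fun s : ℝ => t + s) 0 := by fun_prop
        refine this.eventually (Icc_mem_nhds ?_ ?_) <;> linarith [ht.1, ht.2]
      filter_upwards [hn] with s hs
      simp only [Function.comp, q, hθ1 _ hs, one_mul, Φ]
    have h4 := h1.unique h3
    rw [h4]
    obtain ⟨ha, hb⟩ := hHd (Φ (y, t) - M)
    have : 0 ≤ ‖w‖ ^ 2 / 2 := by positivity
    nlinarith [mul_le_mul_of_nonneg_left hDle ha, mul_le_mul_of_nonneg_right hb this]
  have main := action_bound hadm q hq hqc hsub
  have hval : ∀ t ∈ Icc (0:ℝ) 1, ∀ y, ‖y‖ ≤ R → q y t = softHL x f ε y (t + δ) - (M + κ) := by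
    intro t ht y hy
    have : Φ (y, t) ≤ M := hM _ ⟨by simpa using hy, ht⟩
    simp only [q]
    rw [hθ1 t ⟨by linarith [ht.1], by linarith [ht.2]⟩, hH0 _ (by linarith)]
    simp only [Φ, hβ1 t ht.1]
    ring
  have havg : ∀ (Ω : Set (Eu d)) (t : ℝ), MeasurableSet Ω → Bornology.IsBounded Ω → 0 < volume Ω →
      Ω ⊆ Ω₀ ∪ Ω₁ → t ∈ Icc (0:ℝ) 1 →
      (volume Ω).toReal⁻¹ * (∫ y in Ω, q y t) =
        (volume Ω).toReal⁻¹ * (∫ y in Ω, softHL x f ε y (t + δ)) - (M + κ) := by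
    intro Ω t hm hb hp hs ht
    have hfin : volume Ω ≠ ⊤ := hb.measure_lt_top.ne
    have hpos : 0 < (volume Ω).toReal := ENNReal.toReal_pos hp.ne' hfin
    have hint : IntegrableOn (fun y => softHL x f ε y (t + δ)) Ω := by
      have hc : Continuous (fun y => softHL x f ε y (t + δ)) := by
        have h : Continuous (fun y => Φ (y, t)) := hΦ.continuous.comp (by fun_prop)
        simpa [Φ, hβ1 t ht.1] using h
      exact (hc.continuousOn.integrableOn_compact (hb.isCompact_closure)).mono_set subset_closure
    rw [setIntegral_congr_fun hm fun y hy => hval t ht y (hR y (hs hy)),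
      integral_sub hint (integrableOn_const hfin), setIntegral_const, smul_eq_mul, Measure.real,
      mul_sub, inv_mul_cancel_left₀ hpos.ne']
  rw [havg Ω₁ 1 h₁meas h₁bdd h₁pos subset_union_right (by norm_num),
    havg Ω₀ 0 h₀meas h₀bdd h₀pos subset_union_left (by norm_num), zero_add] at main
  linarith

lemma couple_of_plan {d : ℕ} {μ ν : Measure (Eu d)} [IsProbabilityMeasure μ]
    [IsProbabilityMeasure ν] {ι κ : Type} [Fintype ι] [Fintype κ]
    {Q : ι → Set (Eu d)} {Q' : κ → Set (Eu d)} {Ω₀ Ω₁ : Set (Eu d)}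
    (hμ : μ Ω₀ᶜ = 0) (hν : ν Ω₁ᶜ = 0)
    (hQm : ∀ k, MeasurableSet (Q k)) (hQm' : ∀ k, MeasurableSet (Q' k))
    (hQd : Pairwise (fun i j => Disjoint (Q i) (Q j)))
    (hQd' : Pairwise (fun i j => Disjoint (Q' i) (Q' j)))
    (hQc : Ω₀ ⊆ ⋃ k, Q k) (hQc' : Ω₁ ⊆ ⋃ k, Q' k)
    (p : ι × κ → ℝ) (hp : ∀ a, 0 ≤ p a) (hp1 : ∀ k, ∑ l, p (k, l) = (μ (Q k)).toReal)
    (hp2 : ∀ l, ∑ k, p (k, l) = (ν (Q' l)).toReal) (c : ι → κ → ℝ)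
    (hc : ∀ k l, ∀ x ∈ Q k ∩ Ω₀, ∀ y ∈ Q' l ∩ Ω₁, ‖x - y‖ ^ 2 ≤ c k l) :
    ∃ π : Measure (Eu d × Eu d), π.map Prod.fst = μ ∧ π.map Prod.snd = ν ∧
      ∫⁻ q, ENNReal.ofReal (‖q.1 - q.2‖ ^ 2) ∂π ≤ ENNReal.ofReal (∑ k, ∑ l, p (k, l) * c k l) := by
  have key : ∀ {τ : Measure (Eu d)} [IsProbabilityMeasure τ] {ι : Type} [Fintype ι]
      {Q : ι → Set (Eu d)} {Ω : Set (Eu d)} (_ : τ Ωᶜ = 0) (_ : ∀ k, MeasurableSet (Q k))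
      (_ : Pairwise (fun i j => Disjoint (Q i) (Q j))) (_ : Ω ⊆ ⋃ k, Q k),
      ∑ k, τ.restrict (Q k) = τ := by
    intro τ _ ι _ Q Ω h1 h2 h3 h4
    rw [← Measure.sum_fintype, ← Measure.restrict_iUnion h3 h2]
    refine Measure.restrict_eq_self_of_ae_mem ?_
    refine measure_mono_null ?_ h1
    intro x hx hx'
    exact hx (h4 hx')
  let α : ι → Measure (Eu d) := fun k => (μ (Q k))⁻¹ • μ.restrict (Q k)
  let β : κ → Measure (Eu d) := fun l => (ν (Q' l))⁻¹ • ν.restrict (Q' l)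
  have hα : ∀ k, μ (Q k) ≠ 0 → α k univ = 1 := by
    intro k hk
    simp [α, ENNReal.inv_mul_cancel hk (measure_ne_top _ _)]
  have hβ : ∀ l, ν (Q' l) ≠ 0 → β l univ = 1 := by
    intro l hl
    simp [β, ENNReal.inv_mul_cancel hl (measure_ne_top _ _)]
  have hα1 : ∀ k, α k univ ≤ 1 := by
    intro k; simp only [α, Measure.smul_apply, smul_eq_mul, Measure.restrict_apply_univ]
    exact ENNReal.inv_mul_le_one _
  have hβ1 : ∀ k, β k univ ≤ 1 := by
    intro k; simp only [β, Measure.smul_apply, smul_eq_mul, Measure.restrict_apply_univ]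
    exact ENNReal.inv_mul_le_one _
  have hαf : ∀ k, IsFiniteMeasure (α k) := fun k => ⟨(hα1 k).trans_lt ENNReal.one_lt_top⟩
  have hβf : ∀ k, IsFiniteMeasure (β k) := fun k => ⟨(hβ1 k).trans_lt ENNReal.one_lt_top⟩
  have hz1 : ∀ k l, μ (Q k) = 0 → p (k, l) = 0 := by
    intro k l h
    have := hp1 k
    rw [h, ENNReal.toReal_zero, Finset.sum_eq_zero_iff_of_nonneg (fun l _ => hp (k, l))] at this
    exact this l (Finset.mem_univ _)
  have hz2 : ∀ k l, ν (Q' l) = 0 → p (k, l) = 0 := by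
    intro k l h
    have := hp2 l
    rw [h, ENNReal.toReal_zero, Finset.sum_eq_zero_iff_of_nonneg (fun k _ => hp (k, l))] at this
    exact this k (Finset.mem_univ _)
  refine ⟨∑ k, ∑ l, ENNReal.ofReal (p (k, l)) • (α k).prod (β l), ?_, ?_, ?_⟩
  · rw [Measure.map_finset_sum (by fun_prop)]
    simp_rw [Measure.map_finset_sum (measurable_fst.aemeasurable), Measure.map_smul,
      Measure.map_fst_prod]
    have : ∀ k l, ENNReal.ofReal (p (k, l)) • β l univ • α k = ENNReal.ofReal (p (k, l)) • α k := by
      intro k l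
      by_cases h : ν (Q' l) = 0
      · simp [hz2 k l h]
      · rw [hβ l h, one_smul]
    simp_rw [this, ← Finset.sum_smul, ← ENNReal.ofReal_sum_of_nonneg (fun i _ => hp _), hp1,
      ENNReal.ofReal_toReal (measure_ne_top μ _)]
    conv_rhs => rw [← key hμ hQm hQd hQc]
    refine Finset.sum_congr rfl fun k _ => ?_
    by_cases h : μ (Q k) = 0
    · simp [h, Measure.restrict_eq_zero.2 h]
    · simp only [α]
      rw [smul_smul, ENNReal.mul_inv_cancel h (measure_ne_top _ _), one_smul]
  · rw [Finset.sum_comm, Measure.map_finset_sum (by fun_prop)]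
    simp_rw [Measure.map_finset_sum (measurable_snd.aemeasurable), Measure.map_smul,
      Measure.map_snd_prod]
    have : ∀ k l, ENNReal.ofReal (p (k, l)) • α k univ • β l = ENNReal.ofReal (p (k, l)) • β l := by
      intro k l
      by_cases h : μ (Q k) = 0
      · simp [hz1 k l h]
      · rw [hα k h, one_smul]
    simp_rw [this, ← Finset.sum_smul, ← ENNReal.ofReal_sum_of_nonneg (fun i _ => hp _), hp2,
      ENNReal.ofReal_toReal (measure_ne_top ν _)]
    conv_rhs => rw [← key hν hQm' hQd' hQc']
    refine Finset.sum_congr rfl fun k _ => ?_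
    by_cases h : ν (Q' k) = 0
    · simp [h, Measure.restrict_eq_zero.2 h]
    · simp only [β]
      rw [smul_smul, ENNReal.mul_inv_cancel h (measure_ne_top _ _), one_smul]
  · have hterm : ∀ k l, ENNReal.ofReal (p (k, l)) * ∫⁻ q, ENNReal.ofReal (‖q.1 - q.2‖ ^ 2)
        ∂((α k).prod (β l)) ≤ ENNReal.ofReal (p (k, l) * c k l) ∧ 0 ≤ p (k, l) * c k l := by
      intro k l
      by_cases hk : μ (Q k) = 0
      · simp [hz1 k l hk]
      by_cases hl : ν (Q' l) = 0
      · simp [hz2 k l hl]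
      have hk' : μ (Q k ∩ Ω₀) ≠ 0 := by
        rw [measure_inter_conull hμ]; exact hk
      have hl' : ν (Q' l ∩ Ω₁) ≠ 0 := by
        rw [measure_inter_conull hν]; exact hl
      obtain ⟨x0, hx0⟩ := nonempty_of_measure_ne_zero hk'
      obtain ⟨y0, hy0⟩ := nonempty_of_measure_ne_zero hl'
      have hc0 : 0 ≤ c k l := le_trans (by positivity) (hc k l x0 hx0 y0 hy0)
      refine ⟨?_, mul_nonneg (hp _) hc0⟩
      rw [ENNReal.ofReal_mul (hp _)]
      gcongr
      have ha : ∀ᵐ x ∂(α k), x ∈ Q k ∩ Ω₀ := by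
        refine Measure.ae_smul_measure ?_ _
        have h1 : ∀ᵐ x ∂(μ.restrict (Q k)), x ∈ Ω₀ := ae_restrict_of_ae hμ
        filter_upwards [h1, ae_restrict_mem (hQm k)] with x a b using ⟨b, a⟩
      have hb : ∀ᵐ x ∂(β l), x ∈ Q' l ∩ Ω₁ := by
        refine Measure.ae_smul_measure ?_ _
        have h1 : ∀ᵐ x ∂(ν.restrict (Q' l)), x ∈ Ω₁ := ae_restrict_of_ae hν
        filter_upwards [h1, ae_restrict_mem (hQm' l)] with x a b using ⟨b, a⟩
      have hle : ∀ᵐ q ∂((α k).prod (β l)), ENNReal.ofReal (‖q.1 - q.2‖ ^ 2) ≤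
          ENNReal.ofReal (c k l) := by
        filter_upwards [Measure.quasiMeasurePreserving_fst.ae ha,
          Measure.quasiMeasurePreserving_snd.ae hb] with q h1 h2
        exact ENNReal.ofReal_le_ofReal (hc k l _ h1 _ h2)
      calc _ ≤ ∫⁻ q, ENNReal.ofReal (c k l) ∂((α k).prod (β l)) := lintegral_mono_ae hle
        _ = ENNReal.ofReal (c k l) := by
          rw [lintegral_const, ← univ_prod_univ, Measure.prod_prod, hα k hk, hβ l hl]; simp
    rw [lintegral_finsetSum_measure]
    simp_rw [lintegral_finsetSum_measure, lintegral_smul_measure, smul_eq_mul]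
    rw [ENNReal.ofReal_sum_of_nonneg (fun k _ => Finset.sum_nonneg fun l _ => (hterm k l).2)]
    refine Finset.sum_le_sum fun k _ => ?_
    rw [ENNReal.ofReal_sum_of_nonneg (fun l _ => (hterm k l).2)]
    exact Finset.sum_le_sum fun l _ => (hterm k l).1

lemma plan_of_couple {d : ℕ} {μ ν : Measure (Eu d)} [IsProbabilityMeasure μ]
    [IsProbabilityMeasure ν] {ι κ : Type} [Fintype ι] [Fintype κ]
    {Q : ι → Set (Eu d)} {Q' : κ → Set (Eu d)} {Ω₀ Ω₁ : Set (Eu d)}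
    (hμ : μ Ω₀ᶜ = 0) (hν : ν Ω₁ᶜ = 0)
    (hQm : ∀ k, MeasurableSet (Q k)) (hQm' : ∀ k, MeasurableSet (Q' k))
    (hQd : Pairwise (fun i j => Disjoint (Q i) (Q j)))
    (hQd' : Pairwise (fun i j => Disjoint (Q' i) (Q' j)))
    (hQc : Ω₀ ⊆ ⋃ k, Q k) (hQc' : Ω₁ ⊆ ⋃ k, Q' k)
    (π : Measure (Eu d × Eu d)) (h1 : π.map Prod.fst = μ) (h2 : π.map Prod.snd = ν)
    (c : ι → κ → ℝ) (K : ℝ) (hK : 0 ≤ K) (hc0 : ∀ k l, 0 ≤ c k l)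
    (hc : ∀ k l, ∀ x ∈ Q k ∩ Ω₀, ∀ y ∈ Q' l ∩ Ω₁, c k l ≤ ‖x - y‖ ^ 2 + K) :
    ∃ p : ι × κ → ℝ, (∀ a, 0 ≤ p a) ∧ (∀ k, ∑ l, p (k, l) = (μ (Q k)).toReal) ∧
     (∀ l, ∑ k, p (k, l) = (ν (Q' l)).toReal) ∧
     ENNReal.ofReal (∑ k, ∑ l, p (k, l) * c k l) ≤
       ∫⁻ q, ENNReal.ofReal (‖q.1 - q.2‖ ^ 2) ∂π + ENNReal.ofReal K := by
  have hπ : IsProbabilityMeasure π := by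
    constructor
    rw [← preimage_univ (f := Prod.fst), ← Measure.map_apply measurable_fst MeasurableSet.univ, h1]
    exact measure_univ
  have hae1 : ∀ᵐ q ∂π, q.1 ∈ Ω₀ := by
    have : ∀ᵐ x ∂(π.map Prod.fst), x ∈ Ω₀ := by rw [h1]; exact hμ
    exact ae_of_ae_map measurable_fst.aemeasurable this
  have hae2 : ∀ᵐ q ∂π, q.2 ∈ Ω₁ := by
    have : ∀ᵐ x ∂(π.map Prod.snd), x ∈ Ω₁ := by rw [h2]; exact hν
    exact ae_of_ae_map measurable_snd.aemeasurable this
  have hpm : ∀ a : ι × κ, MeasurableSet (Q a.1 ×ˢ Q' a.2) := fun a => (hQm a.1).prod (hQm' a.2)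
  refine ⟨fun a => (π (Q a.1 ×ˢ Q' a.2)).toReal, fun a => ENNReal.toReal_nonneg, ?_, ?_, ?_⟩
  · intro k
    rw [← ENNReal.toReal_sum (fun _ _ => measure_ne_top _ _), ← h1,
      Measure.map_apply measurable_fst (hQm k), ← tsum_fintype (L := .unconditional _), ← measure_iUnion]
    · congr 1
      refine measure_congr ?_
      filter_upwards [hae2] with q hq
      refine propext ⟨?_, ?_⟩
      · intro h; obtain ⟨l, hl⟩ := mem_iUnion.1 h; exact hl.1
      · intro h; obtain ⟨l, hl⟩ := mem_iUnion.1 (hQc' hq); exact mem_iUnion.2 ⟨l, h, hl⟩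
    · intro i j hij
      exact Set.disjoint_prod.2 (Or.inr (hQd' hij))
    · exact fun l => hpm (k, l)
  · intro l
    rw [← ENNReal.toReal_sum (fun _ _ => measure_ne_top _ _), ← h2,
      Measure.map_apply measurable_snd (hQm' l), ← tsum_fintype (L := .unconditional _), ← measure_iUnion]
    · congr 1
      refine measure_congr ?_
      filter_upwards [hae1] with q hq
      refine propext ⟨?_, ?_⟩
      · intro h; obtain ⟨l, hl⟩ := mem_iUnion.1 h; exact hl.2
      · intro h; obtain ⟨k, hl⟩ := mem_iUnion.1 (hQc hq); exact mem_iUnion.2 ⟨k, hl, h⟩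
    · intro i j hij
      exact Set.disjoint_prod.2 (Or.inl (hQd hij))
    · exact fun k => hpm (k, l)
  · have hnn : ∀ k l, 0 ≤ (π (Q k ×ˢ Q' l)).toReal * c k l :=
      fun k l => mul_nonneg ENNReal.toReal_nonneg (hc0 k l)
    rw [← Fintype.sum_prod_type' (f := fun k l => (π (Q k ×ˢ Q' l)).toReal * c k l),
      ENNReal.ofReal_sum_of_nonneg (fun a _ => hnn a.1 a.2)]
    calc ∑ a : ι × κ, ENNReal.ofReal ((π (Q a.1 ×ˢ Q' a.2)).toReal * c a.1 a.2)
        ≤ ∑ a : ι × κ, ∫⁻ q in Q a.1 ×ˢ Q' a.2,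
          (ENNReal.ofReal (‖q.1 - q.2‖ ^ 2) + ENNReal.ofReal K) ∂π := by
          refine Finset.sum_le_sum fun a _ => ?_
          rw [ENNReal.ofReal_mul ENNReal.toReal_nonneg, ENNReal.ofReal_toReal (measure_ne_top _ _),
            mul_comm, ← setLIntegral_const]
          refine lintegral_mono_ae ?_
          filter_upwards [ae_restrict_mem (hpm a), ae_restrict_of_ae hae1,
            ae_restrict_of_ae hae2] with q hq hq1 hq2
          rw [← ENNReal.ofReal_add (by positivity) hK]
          exact ENNReal.ofReal_le_ofReal (hc _ _ _ ⟨hq.1, hq1⟩ _ ⟨hq.2, hq2⟩)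
      _ = ∫⁻ q in ⋃ a : ι × κ, Q a.1 ×ˢ Q' a.2,
          (ENNReal.ofReal (‖q.1 - q.2‖ ^ 2) + ENNReal.ofReal K) ∂π := by
          rw [lintegral_iUnion hpm, tsum_fintype]
          rintro ⟨i, j⟩ ⟨i', j'⟩ hne
          refine Set.disjoint_prod.2 ?_
          by_cases hi : i = i'
          · right; subst hi; exact hQd' fun h => hne (Prod.ext rfl h)
          · left; exact hQd hi
      _ ≤ ∫⁻ q, (ENNReal.ofReal (‖q.1 - q.2‖ ^ 2) + ENNReal.ofReal K) ∂π :=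
          setLIntegral_le_lintegral _ _
      _ = _ := by
          rw [lintegral_add_right _ measurable_const]; simp

lemma unif_prob {d : ℕ} {Ω : Set (Eu d)} (hb : Bornology.IsBounded Ω) (hp : 0 < volume Ω) :
    IsProbabilityMeasure ((volume Ω)⁻¹ • volume.restrict Ω) := by
  constructor
  simp [ENNReal.inv_mul_cancel hp.ne' hb.measure_lt_top.ne]

lemma unif_compl {d : ℕ} {Ω : Set (Eu d)} (hm : MeasurableSet Ω) :
    ((volume Ω)⁻¹ • volume.restrict Ω) Ωᶜ = 0 := by
  simp [Measure.restrict_apply hm.compl]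

lemma integral_le_cells {d : ℕ} {μ : Measure (Eu d)} [IsProbabilityMeasure μ] {ι : Type}
    [Fintype ι] {Q : ι → Set (Eu d)} {Ω : Set (Eu d)} (hμ : μ Ωᶜ = 0)
    (hQm : ∀ k, MeasurableSet (Q k)) (hQd : Pairwise (fun i j => Disjoint (Q i) (Q j)))
    (hQc : Ω ⊆ ⋃ k, Q k) (F : Eu d → ℝ) (hF : Integrable F μ) (a : ι → ℝ)
    (h : ∀ k, ∀ x ∈ Q k ∩ Ω, F x ≤ a k) : ∫ x, F x ∂μ ≤ ∑ k, (μ (Q k)).toReal * a k := by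
  classical
  have hae : ∀ᵐ x ∂μ, x ∈ Ω := hμ
  have hint : ∀ k ∈ Finset.univ, Integrable ((Q k).indicator (fun _ => a k)) μ :=
    fun k _ => (integrable_const _).indicator (hQm k)
  calc ∫ x, F x ∂μ ≤ ∫ x, ∑ k, (Q k).indicator (fun _ => a k) x ∂μ := by
        refine integral_mono_ae hF (integrable_finsetSum _ hint) ?_
        filter_upwards [hae] with x hx
        obtain ⟨k, hk⟩ := mem_iUnion.1 (hQc hx)
        rw [Finset.sum_eq_single k]
        · rw [indicator_of_mem hk]; exact h k x ⟨hk, hx⟩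
        · intro j _ hj
          exact indicator_of_notMem (fun hxj => (Set.disjoint_left.1 (hQd hj) hxj) hk) _
        · simp
    _ = _ := by
        rw [integral_finsetSum _ hint]
        refine Finset.sum_congr rfl fun k _ => ?_
        rw [integral_indicator_const _ (hQm k)]; simp [Measure.real]

lemma sum_cells {d : ℕ} {μ : Measure (Eu d)} [IsProbabilityMeasure μ] {ι : Type}
    [Fintype ι] {Q : ι → Set (Eu d)} {Ω : Set (Eu d)} (hμ : μ Ωᶜ = 0)
    (hQm : ∀ k, MeasurableSet (Q k)) (hQd : Pairwise (fun i j => Disjoint (Q i) (Q j)))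
    (hQc : Ω ⊆ ⋃ k, Q k) : ∑ k, (μ (Q k)).toReal = 1 := by
  have h1 := integral_le_cells hμ hQm hQd hQc (fun _ => 1) (integrable_const _) (fun _ => 1)
    (fun _ _ _ => le_rfl)
  have h2 := integral_le_cells hμ hQm hQd hQc (fun _ => -1) (integrable_const _) (fun _ => -1)
    (fun _ _ _ => le_rfl)
  simp at h1 h2
  linarith

lemma lower_bound {d : ℕ} {Ω₀ Ω₁ : Set (Eu d)} {ρ : Eu d → ℝ → ℝ} {v : Eu d → ℝ → Eu d}
    (hadm : UniformAdmissible Ω₀ Ω₁ ρ v)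
    (h₀meas : MeasurableSet Ω₀) (h₁meas : MeasurableSet Ω₁)
    (h₀bdd : Bornology.IsBounded Ω₀) (h₁bdd : Bornology.IsBounded Ω₁)
    (h₀pos : 0 < volume Ω₀) (h₁pos : 0 < volume Ω₁) :
    W2sq ((volume Ω₀)⁻¹ • volume.restrict Ω₀) ((volume Ω₁)⁻¹ • volume.restrict Ω₁) ≤
      ∫⁻ q, ENNReal.ofReal (ρ q.1 q.2 * ‖v q.1 q.2‖ ^ 2) ∂(spaceTime d) := by
  set A := ∫⁻ q, ENNReal.ofReal (ρ q.1 q.2 * ‖v q.1 q.2‖ ^ 2) ∂(spaceTime d) with hA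
  have hAtop : A ≠ ⊤ := hadm.2.2.2.2.1.ne
  set μ := (volume Ω₀)⁻¹ • volume.restrict Ω₀ with hμ
  set ν := (volume Ω₁)⁻¹ • volume.restrict Ω₁ with hν
  have hμp : IsProbabilityMeasure μ := unif_prob h₀bdd h₀pos
  have hνp : IsProbabilityMeasure ν := unif_prob h₁bdd h₁pos
  have hμc : μ Ω₀ᶜ = 0 := unif_compl h₀meas
  have hνc : ν Ω₁ᶜ = 0 := unif_compl h₁meas
  obtain ⟨R0, hR0⟩ := (h₀bdd.union h₁bdd).exists_norm_le
  set R := max R0 0 with hRdef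
  have hRnn : 0 ≤ R := le_max_right _ _
  have hR : ∀ x ∈ Ω₀ ∪ Ω₁, ‖x‖ ≤ R := fun x hx => (hR0 x hx).trans (le_max_left _ _)
  have key : ∀ η : ℝ, 0 < η → η ≤ 1 → W2sq μ ν ≤ A + ENNReal.ofReal ((4*R^2+12*R+6)*η) := by
    intro η hη hη1
    obtain ⟨ι, _, _, Q, x, hQm, hQd, -, hxQ, hxΩ, hQη, hQc⟩ := exists_cells Ω₀ h₀bdd η hη
    obtain ⟨κ, _, _, Q', y, hQm', hQd', -, hyQ, hyΩ, hQη', hQc'⟩ := exists_cells Ω₁ h₁bdd η hη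
    have hne : Nonempty ι := by
      obtain ⟨z, hz⟩ := nonempty_of_measure_ne_zero h₀pos.ne'
      obtain ⟨k, -⟩ := mem_iUnion.1 (hQc hz)
      exact ⟨k⟩
    set m : ι → ℝ := fun k => (μ (Q k)).toReal with hm
    set n : κ → ℝ := fun k => (ν (Q' k)).toReal with hn
    have hm1 : ∑ k, m k = 1 := sum_cells hμc hQm hQd hQc
    have hn1 : ∑ k, n k = 1 := sum_cells hνc hQm' hQd' hQc'
    have hnorm : ∀ a ∈ Ω₀, ∀ b ∈ Ω₁, ‖b - a‖ ≤ 2 * R := by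
      intro a ha b hb
      have := norm_sub_le b a
      have := hR a (Or.inl ha)
      have := hR b (Or.inr hb)
      linarith
    obtain ⟨p, hp0, hp1, hp2, hpc⟩ := finite_duality m n (fun k => ENNReal.toReal_nonneg)
      (fun k => ENNReal.toReal_nonneg) hm1 hn1 (fun k l => ‖x k - y l‖ ^ 2 / 2)
      (A.toReal / 2 + (2 * R ^ 2 + 2 * R + 1) * η) (by
        intro f g hfg
        refine le_of_forall_pos_le_add fun ε' hε' => ?_
        set K : ℝ := Real.log (Fintype.card ι) with hK
        have hK0 : 0 ≤ K := Real.log_nonneg (by exact_mod_cast Fintype.card_pos)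
        set ε := ε' / (K + 1) with hε
        have hε0 : 0 < ε := by positivity
        have hεK : ε * K ≤ ε' := by
          rw [hε, div_mul_eq_mul_div, div_le_iff₀ (by positivity)]; nlinarith
        have hb := hopf_bound hadm h₀meas h₁meas h₀bdd h₁bdd h₀pos h₁pos x f ε η hε0 hη
        have hconv : ∀ (Ω : Set (Eu d)) (F : Eu d → ℝ), (volume Ω).toReal⁻¹ * ∫ z in Ω, F z =
            ∫ z, F z ∂((volume Ω)⁻¹ • volume.restrict Ω) := by
          intro Ω F
          rw [integral_smul_measure, ENNReal.toReal_inv, smul_eq_mul]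
        rw [hconv, hconv, ← hμ, ← hν, ← hA] at hb
        have hcont : ∀ b : ℝ, 0 < b → Continuous (fun z => softHL x f ε z b) := by
          intro b hb
          exact (contDiff_softHL x f ε (fun _ => b) contDiff_const (fun _ => hb)).continuous.comp
            (g := fun z : Eu d × ℝ => softHL x f ε z.1 b) (f := fun z => (z, (0:ℝ))) (by fun_prop)
        have hintg : ∀ (Ω : Set (Eu d)), Bornology.IsBounded Ω → 0 < volume Ω → ∀ b : ℝ, 0 < b →
            Integrable (fun z => softHL x f ε z b) ((volume Ω)⁻¹ • volume.restrict Ω) := by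
          intro Ω hbd hpos b hb
          refine Integrable.smul_measure ?_ (ENNReal.inv_ne_top.2 hpos.ne')
          exact ((hcont b hb).continuousOn.integrableOn_compact
            (hbd.isCompact_closure)).mono_set subset_closure
        have h0 := integral_le_cells hμc hQm hQd hQc _ (hintg Ω₀ h₀bdd h₀pos η hη)
          (fun k => f k + η / 2) (by
            rintro k z ⟨hz, -⟩
            refine (softHL_le x f ε hε0 z η k).trans ?_
            have h1 := hQη k z hz
            have : ‖z - x k‖ ^ 2 / (2 * η) ≤ η / 2 := by
              rw [div_le_iff₀ (by positivity)]
              nlinarith [norm_nonneg (z - x k)]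
            linarith)
        have h1 := integral_le_cells hνc hQm' hQd' hQc' _ (hintg Ω₁ h₁bdd h₁pos (1 + η) (by positivity)).neg
          (fun l => -(g l - (2 * R ^ 2 + 2 * R + 1/2) * η - ε * K)) (by
            rintro l z ⟨hz, hzΩ⟩
            refine neg_le_neg ?_
            refine le_softHL x f ε hε0 z (1 + η) _ ?_
            intro k
            have h2 := hfg k l
            set s := ‖z - x k‖ with hs
            have hs0 : 0 ≤ s := norm_nonneg _
            have hs2 : s ≤ 2 * R := hnorm _ (hxΩ k) _ hzΩ
            have h3 : ‖x k - y l‖ ≤ s + η := by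
              have e : x k - y l = (z - y l) - (z - x k) := by abel
              rw [e]
              have := norm_sub_le (z - y l) (z - x k)
              have := hQη' l z hz
              linarith
            have h4 : ‖x k - y l‖ ^ 2 ≤ (s + η) ^ 2 := by gcongr
            have h5 : s ^ 2 / 2 - s ^ 2 * η / 2 ≤ s ^ 2 / (2 * (1 + η)) := by
              rw [le_div_iff₀ (by positivity)]
              nlinarith [mul_nonneg (sq_nonneg s) (sq_nonneg η)]
            have h6 : s ^ 2 ≤ 4 * R ^ 2 := by nlinarith
            have h7 : s ^ 2 * η ≤ 4 * R ^ 2 * η := by gcongr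
            have h8 : s * η ≤ 2 * R * η := by gcongr
            have h9 : η ^ 2 ≤ η := by nlinarith
            nlinarith)
        rw [integral_neg'] at h1
        have e1 : ∑ k, (μ (Q k)).toReal * (f k + η / 2) = ∑ k, m k * f k + η / 2 := by
          simp only [mul_add, Finset.sum_add_distrib, ← Finset.sum_mul]
          change _ + (∑ k, m k) * (η / 2) = _
          rw [hm1, one_mul]
        have e2 : ∑ l, (ν (Q' l)).toReal * -(g l - (2 * R ^ 2 + 2 * R + 1/2) * η - ε * K) =
            -(∑ l, n l * g l - (2 * R ^ 2 + 2 * R + 1/2) * η - ε * K) := by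
          simp only [mul_neg, mul_sub, Finset.sum_neg_distrib, Finset.sum_sub_distrib, ← Finset.sum_mul]
          change -(_ - (∑ k, n k) * _ - (∑ k, n k) * _) = _
          rw [hn1, one_mul, one_mul]
        rw [e1] at h0
        rw [e2] at h1
        linarith)
    obtain ⟨π, hπ1, hπ2, hπc⟩ := couple_of_plan hμc hνc hQm hQm' hQd hQd' hQc hQc' p hp0 hp1 hp2
      (fun k l => ‖x k - y l‖ ^ 2 + (8 * R + 4) * η) (by
        rintro k l a ⟨ha, haΩ⟩ b ⟨hb, hbΩ⟩
        have h1 : ‖a - b‖ ≤ ‖x k - y l‖ + 2 * η := by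
          have e : a - b = (x k - y l) + ((a - x k) - (b - y l)) := by abel
          rw [e]
          have := norm_add_le (x k - y l) ((a - x k) - (b - y l))
          have := norm_sub_le (a - x k) (b - y l)
          have := hQη k a ha
          have := hQη' l b hb
          linarith
        have h2 : ‖a - b‖ ^ 2 ≤ (‖x k - y l‖ + 2 * η) ^ 2 := by gcongr
        have h3 : ‖x k - y l‖ ≤ 2 * R := by rw [norm_sub_rev]; exact hnorm _ (hxΩ k) _ (hyΩ l)
        nlinarith [mul_le_mul_of_nonneg_right h3 hη.le])
    have hle : W2sq μ ν ≤ ∫⁻ q, ENNReal.ofReal (‖q.1 - q.2‖ ^ 2) ∂π :=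
      sInf_le ⟨π, hπ1, hπ2, rfl⟩
    refine hle.trans (hπc.trans ?_)
    have hfin : A + ENNReal.ofReal ((4*R^2+12*R+6)*η) =
        ENNReal.ofReal (A.toReal + (4*R^2+12*R+6)*η) := by
      rw [ENNReal.ofReal_add ENNReal.toReal_nonneg (by positivity), ENNReal.ofReal_toReal hAtop]
    rw [hfin]
    refine ENNReal.ofReal_le_ofReal ?_
    have e : ∑ k, ∑ l, p (k, l) * (‖x k - y l‖ ^ 2 + (8 * R + 4) * η) =
        2 * ∑ k, ∑ l, p (k, l) * (‖x k - y l‖ ^ 2 / 2) + (8 * R + 4) * η := by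
      simp only [mul_add, Finset.sum_add_distrib]
      congr 1
      · simp only [Finset.mul_sum]
        exact Finset.sum_congr rfl fun k _ => Finset.sum_congr rfl fun l _ => by ring
      · simp only [← Finset.sum_mul, hp1, hm1, one_mul]
    rw [e]
    linarith
  refine ENNReal.le_of_forall_pos_le_add fun ε hε _ => ?_
  set B := 4*R^2+12*R+6 with hB
  have hB0 : 0 < B := by positivity
  have hε' : (0:ℝ) < ε := hε
  refine (key (min 1 (ε / B)) (lt_min one_pos (by positivity)) (min_le_left _ _)).trans ?_
  gcongr
  rw [← ENNReal.ofReal_coe_nnreal]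
  refine ENNReal.ofReal_le_ofReal ?_
  calc B * min 1 (ε / B) ≤ B * (ε / B) := by gcongr; exact min_le_right _ _
    _ = ε := by field_simp

/-- A transport phase on `[α, β]` between two functionals. -/
def PhaseOK (d : ℕ) (α β : ℝ) (l₀ l₁ : (Eu d → ℝ) → ℝ) (C : ℝ) : Prop :=
  ∃ (ρ : Eu d → ℝ → ℝ) (v : Eu d → ℝ → Eu d),
  Measurable (fun q : Eu d × ℝ => ρ q.1 q.2) ∧
  Measurable (fun q : Eu d × ℝ => v q.1 q.2) ∧
  (∀ x t, 0 ≤ ρ x t) ∧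
  (∀ᵐ t ∂(volume.restrict (Icc α β)),
    ∃ (E : Set (Eu d)) (c : ℝ),
      MeasurableSet E ∧ Bornology.IsBounded E ∧ 0 < volume E ∧ 0 < c ∧
      (∀ᵐ x ∂(volume : Measure (Eu d)), ρ x t = c * E.indicator (fun _ => (1:ℝ)) x) ∧
      (∫ x, ρ x t) = 1) ∧
  (∫⁻ q, ENNReal.ofReal (ρ q.1 q.2 * ‖v q.1 q.2‖ ^ 2)
    ∂((volume : Measure (Eu d)).prod (volume.restrict (Icc α β)))) ≤ ENNReal.ofReal C ∧
  ∀ q : Eu d → ℝ → ℝ,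
    ContDiff ℝ (⊤ : ℕ∞) (fun z : Eu d × ℝ => q z.1 z.2) →
    HasCompactSupport (fun z : Eu d × ℝ => q z.1 z.2) →
    IntegrableOn (fun t => ∫ x, ρ x t *
        (deriv (fun s => q x s) t + ⟪v x t, gradient (fun y => q y t) x⟫)) (Icc α β) ∧
    (∫ t in Icc α β, ∫ x, ρ x t *
        (deriv (fun s => q x s) t + ⟪v x t, gradient (fun y => q y t) x⟫)) =
      l₁ (fun x => q x β) - l₀ (fun x => q x α)

lemma cov_int {d : ℕ} (A : Set (Eu d)) (hA : MeasurableSet A) (a : Eu d) (s : ℝ) (hs : 0 < s)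
    (G : Eu d → ℝ) :
    (s⁻¹) ^ d * ∫ x, A.indicator (fun _ => (1:ℝ)) (s⁻¹ • (x - a)) * G x =
      ∫ y in A, G (a + s • y) := by
  have h := Measure.integral_comp_smul (volume : Measure (Eu d))
    (fun z => A.indicator (fun _ => (1:ℝ)) (s⁻¹ • z) * G (a + z)) s
  have h2 : ∫ z, A.indicator (fun _ => (1:ℝ)) (s⁻¹ • z) * G (a + z) =
      ∫ x, A.indicator (fun _ => (1:ℝ)) (s⁻¹ • (x - a)) * G x := by
    rw [← integral_sub_right_eq_self (fun z => A.indicator (fun _ => (1:ℝ)) (s⁻¹ • z) * G (a + z)) a]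
    simp
  rw [h2] at h
  simp only [finrank_euclideanSpace, Fintype.card_fin, smul_eq_mul] at h
  rw [abs_of_pos (by positivity), ← inv_pow] at h
  rw [← h, ← integral_indicator hA]
  refine integral_congr_ae (Filter.Eventually.of_forall fun y => ?_)
  simp only [inv_smul_smul₀ hs.ne']
  by_cases hy : y ∈ A <;> simp [hy]

lemma cov_vol {d : ℕ} (A : Set (Eu d)) (a : Eu d) (s : ℝ) (hs : 0 < s) :
    volume {x : Eu d | s⁻¹ • (x - a) ∈ A} = ENNReal.ofReal (s ^ d) * volume A := by
  have e : {x : Eu d | s⁻¹ • (x - a) ∈ A} = (fun x => x - a) ⁻¹' ((s⁻¹ • ·) ⁻¹' A) := rfl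
  simp only [sub_eq_add_neg] at e ⊢
  rw [e, measure_preimage_add_right, Measure.addHaar_preimage_smul _ (by positivity)]
  simp only [finrank_euclideanSpace, Fintype.card_fin]
  rw [abs_of_pos (by positivity), inv_pow, inv_inv]

lemma cov_bdd {d : ℕ} (A : Set (Eu d)) (hb : Bornology.IsBounded A) (a : Eu d) (s : ℝ)
    (hs : 0 < s) : Bornology.IsBounded {x : Eu d | s⁻¹ • (x - a) ∈ A} := by
  obtain ⟨R, hR⟩ := hb.exists_norm_le
  refine (Metric.isBounded_closedBall (x := a) (r := s * R)).subset fun x hx => ?_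
  have := hR _ hx
  rw [norm_smul, norm_inv, Real.norm_of_nonneg hs.le, inv_mul_le_iff₀ hs] at this
  simpa [dist_eq_norm] using this

lemma cov_meas {d : ℕ} (A : Set (Eu d)) (hA : MeasurableSet A) (a : Eu d) (s : ℝ) :
    MeasurableSet {x : Eu d | s⁻¹ • (x - a) ∈ A} := by
  have : Measurable (fun x : Eu d => s⁻¹ • (x - a)) := by fun_prop
  exact this hA

lemma phase_aux {d : ℕ} (A : Set (Eu d)) (hA : MeasurableSet A) (hb : Bornology.IsBounded A)
    (α β : ℝ) (hαβ : α ≤ β) (a a' : ℝ → Eu d) (s s' : ℝ → ℝ)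
    (ha : ∀ t, HasDerivAt a (a' t) t) (hs : ∀ t, HasDerivAt s (s' t) t)
    (ha' : Continuous a') (hs' : Continuous s') (q : Eu d → ℝ → ℝ)
    (hq : ContDiff ℝ (⊤ : ℕ∞) (fun z : Eu d × ℝ => q z.1 z.2)) :
    IntegrableOn (fun t => ∫ y in A, fderiv ℝ (fun z : Eu d × ℝ => q z.1 z.2)
      (a t + s t • y, t) (a' t + s' t • y, 1)) (Icc α β) ∧
    ∫ t in Icc α β, ∫ y in A, fderiv ℝ (fun z : Eu d × ℝ => q z.1 z.2)
      (a t + s t • y, t) (a' t + s' t • y, 1) =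
      (∫ y in A, q (a β + s β • y) β) - ∫ y in A, q (a α + s α • y) α := by
  have hac : Continuous a := continuous_iff_continuousAt.2 fun t => (ha t).continuousAt
  have hsc : Continuous s := continuous_iff_continuousAt.2 fun t => (hs t).continuousAt
  have hqc : Continuous (fun z : Eu d × ℝ => q z.1 z.2) := hq.continuous
  have hDc : Continuous (fderiv ℝ (fun z : Eu d × ℝ => q z.1 z.2)) :=
    hq.continuous_fderiv (by simp)
  have hHc : Continuous (fun p : ℝ × Eu d => fderiv ℝ (fun z : Eu d × ℝ => q z.1 z.2)
      (a p.1 + s p.1 • p.2, p.1) (a' p.1 + s' p.1 • p.2, 1)) :=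
    (hDc.comp (by fun_prop)).clm_apply (by fun_prop)
  have hint : Integrable (fun p : ℝ × Eu d => fderiv ℝ (fun z : Eu d × ℝ => q z.1 z.2)
      (a p.1 + s p.1 • p.2, p.1) (a' p.1 + s' p.1 • p.2, 1))
      ((volume.restrict (Icc α β)).prod (volume.restrict A)) := by
    rw [Measure.prod_restrict]
    have hK : IsCompact (Icc α β ×ˢ closure A) := isCompact_Icc.prod hb.isCompact_closure
    exact (hHc.continuousOn.integrableOn_compact hK).mono_set
      (Set.prod_mono le_rfl subset_closure)
  refine ⟨hint.integral_prod_left, ?_⟩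
  rw [integral_integral_swap hint]
  have hfin : volume A ≠ ⊤ := hb.measure_lt_top.ne
  have hi : ∀ t, IntegrableOn (fun y => q (a t + s t • y) t) A := by
    intro t
    have : Continuous (fun y => q (a t + s t • y) t) :=
      hqc.comp (by fun_prop : Continuous (fun y : Eu d => ((a t + s t • y, t) : Eu d × ℝ)))
    exact (this.continuousOn.integrableOn_compact hb.isCompact_closure).mono_set subset_closure
  rw [← integral_sub (hi β) (hi α)]
  refine integral_congr_ae (Filter.Eventually.of_forall fun y => ?_)
  beta_reduce
  rw [integral_Icc_eq_integral_Ioc, ← intervalIntegral.integral_of_le hαβ]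
  have hder : ∀ t, HasDerivAt (fun t => q (a t + s t • y) t)
      (fderiv ℝ (fun z : Eu d × ℝ => q z.1 z.2) (a t + s t • y, t) (a' t + s' t • y, 1)) t := by
    intro t
    have hd := ((hq.differentiable (by simp)) (a t + s t • y, t)).hasFDerivAt
    have hc : HasDerivAt (fun t => ((a t + s t • y, t) : Eu d × ℝ)) (a' t + s' t • y, 1) t :=
      ((ha t).add ((hs t).smul_const y)).prodMk (hasDerivAt_id t)
    exact HasFDerivAt.comp_hasDerivAt (f := fun t => ((a t + s t • y, t) : Eu d × ℝ)) t hd hc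
  refine intervalIntegral.integral_eq_sub_of_hasDerivAt (fun t _ => hder t) ?_
  have : Continuous (fun t => fderiv ℝ (fun z : Eu d × ℝ => q z.1 z.2)
      (a t + s t • y, t) (a' t + s' t • y, 1)) :=
    hHc.comp (by fun_prop : Continuous (fun t : ℝ => ((t, y) : ℝ × Eu d)))
  exact this.intervalIntegrable _ _

/-- Finitely many disjoint pieces moved by scalings and translations. -/
lemma phase_main {d : ℕ} {ι : Type} [Fintype ι] [DecidableEq ι] (A : ι → Set (Eu d))
    (hA : ∀ i, MeasurableSet (A i)) (hb : ∀ i, Bornology.IsBounded (A i))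
    (c : ℝ) (hc : 0 < c) (hsum : ∑ i, c * (volume (A i)).toReal = 1)
    (α β : ℝ) (hαβ : α < β) (a a' : ι → ℝ → Eu d) (s s' : ℝ → ℝ)
    (ha : ∀ i t, HasDerivAt (a i) (a' i t) t) (hs : ∀ t, HasDerivAt s (s' t) t)
    (ha' : ∀ i, Continuous (a' i)) (hs' : Continuous s')
    (hpos : ∀ t ∈ Ioo α β, 0 < s t)
    (hdis : ∀ t ∈ Ioo α β, ∀ i j x, (s t)⁻¹ • (x - a i t) ∈ A i → (s t)⁻¹ • (x - a j t) ∈ A j →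
      i = j)
    (B : ι → ℝ) (hB : ∀ t ∈ Ioo α β, ∀ i, ∀ y ∈ A i, ‖a' i t + s' t • y‖ ^ 2 ≤ B i) :
    PhaseOK d α β (fun f => ∑ i, c * ∫ y in A i, f (a i α + s α • y))
      (fun f => ∑ i, c * ∫ y in A i, f (a i β + s β • y))
      ((β - α) * ∑ i, c * (volume (A i)).toReal * B i) := by
  have hac : ∀ i, Continuous (a i) :=
    fun i => continuous_iff_continuousAt.2 fun t => (ha i t).continuousAt
  have hsc : Continuous s := continuous_iff_continuousAt.2 fun t => (hs t).continuousAt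
  set χ : ι → Eu d → ℝ → ℝ := fun i x t =>
    (A i).indicator (fun _ => (1:ℝ)) ((s t)⁻¹ • (x - a i t)) with hχ
  set w : ι → Eu d → ℝ → Eu d := fun i x t => a' i t + (s' t / s t) • (x - a i t) with hw
  have hχ1 : ∀ i x t, (s t)⁻¹ • (x - a i t) ∈ A i → χ i x t = 1 := by
    intro i x t h; simp only [hχ]; rw [indicator_of_mem h]
  have hχ0 : ∀ i x t, (s t)⁻¹ • (x - a i t) ∉ A i → χ i x t = 0 := by
    intro i x t h; simp only [hχ]; rw [indicator_of_notMem h]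
  have hχnn : ∀ i x t, 0 ≤ χ i x t := by
    intro i x t; exact indicator_nonneg (fun _ _ => zero_le_one) _
  have hχm : ∀ i, Measurable (fun q : Eu d × ℝ => χ i q.1 q.2) := by
    intro i
    have h1 : Measurable ((A i).indicator (fun _ => (1:ℝ))) := measurable_const.indicator (hA i)
    have h2 : Measurable (fun q : Eu d × ℝ => (s q.2)⁻¹ • (q.1 - a i q.2)) :=
      (hsc.measurable.comp measurable_snd).inv.smul
        (measurable_fst.sub ((hac i).measurable.comp measurable_snd))
    exact h1.comp h2
  have hwm : ∀ i, Measurable (fun q : Eu d × ℝ => w i q.1 q.2) := by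
    intro i
    exact ((ha' i).measurable.comp measurable_snd).add
      (((hs'.measurable.comp measurable_snd).div (hsc.measurable.comp measurable_snd)).smul
        (measurable_fst.sub ((hac i).measurable.comp measurable_snd)))
  set ρ : Eu d → ℝ → ℝ := fun x t => ∑ i, c * (|s t|⁻¹) ^ d * χ i x t with hρ
  set v : Eu d → ℝ → Eu d := fun x t => ∑ i, χ i x t • w i x t with hv
  have hρm : Measurable (fun q : Eu d × ℝ => ρ q.1 q.2) := by
    refine Finset.measurable_fun_sum _ fun i _ => ?_
    refine Measurable.mul ?_ (hχm i)
    exact ((hsc.measurable.comp measurable_snd).abs.inv.pow_const d).const_mul c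
  have hvm : Measurable (fun q : Eu d × ℝ => v q.1 q.2) :=
    Finset.measurable_fun_sum _ fun i _ => (hχm i).smul (hwm i)
  have hρnn : ∀ x t, 0 ≤ ρ x t := by
    intro x t
    exact Finset.sum_nonneg fun i _ => mul_nonneg (by positivity) (hχnn i x t)
  have hone : ∀ t ∈ Ioo α β, ∀ x i, (s t)⁻¹ • (x - a i t) ∈ A i → ∀ j, j ≠ i → χ j x t = 0 := by
    intro t ht x i hi j hj
    exact hχ0 j x t fun h => hj (hdis t ht j i x h hi)
  -- pointwise splitting
  have hsplit : ∀ t ∈ Ioo α β, ∀ x (F : Eu d → ℝ),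
      ρ x t * F (v x t) = ∑ i, c * (s t)⁻¹ ^ d * (χ i x t * F (w i x t)) := by
    intro t ht x F
    have hst := hpos t ht
    by_cases h : ∃ i, (s t)⁻¹ • (x - a i t) ∈ A i
    · obtain ⟨i, hi⟩ := h
      have h0 := hone t ht x i hi
      have e1 : ρ x t = c * (s t)⁻¹ ^ d := by
        simp only [hρ]
        rw [Finset.sum_eq_single i (fun j _ hj => by rw [h0 j hj, mul_zero]) (by simp),
          hχ1 i x t hi, mul_one, abs_of_pos hst]
      have e2 : v x t = w i x t := by
        simp only [hv]
        rw [Finset.sum_eq_single i (fun j _ hj => by rw [h0 j hj, zero_smul]) (by simp),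
          hχ1 i x t hi, one_smul]
      rw [e1, e2, Finset.sum_eq_single i (fun j _ hj => by rw [h0 j hj, zero_mul, mul_zero])
        (by simp), hχ1 i x t hi, one_mul]
    · push Not at h
      have h0 : ∀ j, χ j x t = 0 := fun j => hχ0 j x t (h j)
      simp only [hρ, h0]
      simp
  have hχP : ∀ i t x, χ i x t =
      ({x : Eu d | (s t)⁻¹ • (x - a i t) ∈ A i}).indicator (fun _ => (1:ℝ)) x := fun i t x => rfl
  have hPm : ∀ i t, MeasurableSet {x : Eu d | (s t)⁻¹ • (x - a i t) ∈ A i} :=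
    fun i t => cov_meas _ (hA i) _ _
  have hPb : ∀ i, ∀ t ∈ Ioo α β, Bornology.IsBounded {x : Eu d | (s t)⁻¹ • (x - a i t) ∈ A i} :=
    fun i t ht => cov_bdd _ (hb i) _ _ (hpos t ht)
  have hχint : ∀ i, ∀ t ∈ Ioo α β, ∀ G : Eu d → ℝ, Continuous G →
      Integrable (fun x => χ i x t * G x) := by
    intro i t ht G hG
    have h1 : IntegrableOn G {x : Eu d | (s t)⁻¹ • (x - a i t) ∈ A i} :=
      (hG.continuousOn.integrableOn_compact (hPb i t ht).isCompact_closure).mono_set subset_closure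
    have h2 := (integrable_indicator_iff (hPm i t)).2 h1
    refine h2.congr (Filter.Eventually.of_forall fun x => ?_)
    beta_reduce
    rw [hχP]
    by_cases hx : x ∈ {x : Eu d | (s t)⁻¹ • (x - a i t) ∈ A i}
    · rw [indicator_of_mem hx, indicator_of_mem hx, one_mul]
    · rw [indicator_of_notMem hx, indicator_of_notMem hx, zero_mul]
  have hslice : ∀ t ∈ Ioo α β, ∀ G : ι → Eu d → ℝ, (∀ i, Continuous (G i)) →
      ∫ x, ∑ i, c * (s t)⁻¹ ^ d * (χ i x t * G i x) =
        ∑ i, c * ∫ y in A i, G i (a i t + s t • y) := by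
    intro t ht G hG
    rw [integral_finsetSum _ fun i _ => (hχint i t ht (G i) (hG i)).const_mul _]
    refine Finset.sum_congr rfl fun i _ => ?_
    rw [integral_const_mul, mul_assoc, ← cov_int (A i) (hA i) (a i t) (s t) (hpos t ht)]
  have haeIoo : ∀ᵐ t ∂(volume.restrict (Icc α β)), t ∈ Ioo α β := by
    rw [← restrict_Ioo_eq_restrict_Icc]
    exact ae_restrict_mem measurableSet_Ioo
  refine ⟨ρ, v, hρm, hvm, hρnn, ?_, ?_, ?_⟩
  · filter_upwards [haeIoo] with t ht
    have hst := hpos t ht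
    refine ⟨⋃ i, {x : Eu d | (s t)⁻¹ • (x - a i t) ∈ A i}, c * (s t)⁻¹ ^ d,
      MeasurableSet.iUnion fun i => hPm i t, ?_, ?_, by positivity, ?_, ?_⟩
    · exact (Bornology.isBounded_iUnion).2 fun i => hPb i t ht
    · by_contra hcon
      have hz : ∀ i, volume (A i) = 0 := by
        intro i
        have h1 : volume {x : Eu d | (s t)⁻¹ • (x - a i t) ∈ A i} = 0 :=
          measure_mono_null (subset_iUnion (fun i => {x : Eu d | (s t)⁻¹ • (x - a i t) ∈ A i}) i)
            (by simpa using hcon)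
        rw [cov_vol _ _ _ hst] at h1
        rcases mul_eq_zero.1 h1 with h | h
        · rw [ENNReal.ofReal_eq_zero] at h
          exact absurd h (not_le.2 (by positivity))
        · exact h
      simp [hz] at hsum
    · refine Filter.Eventually.of_forall fun x => ?_
      have h := hsplit t ht x (fun _ => 1)
      rw [mul_one] at h
      rw [h, ← Finset.mul_sum]
      congr 1
      by_cases hx : ∃ i, (s t)⁻¹ • (x - a i t) ∈ A i
      · obtain ⟨i, hi⟩ := hx
        have hmem : x ∈ ⋃ i, {x : Eu d | (s t)⁻¹ • (x - a i t) ∈ A i} := mem_iUnion.2 ⟨i, hi⟩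
        rw [indicator_of_mem hmem,
          Finset.sum_eq_single i (fun j _ hj => by rw [hone t ht x i hi j hj, zero_mul]) (by simp),
          hχ1 i x t hi, one_mul]
      · rw [indicator_of_notMem (by simpa using hx)]
        push Not at hx
        exact Finset.sum_eq_zero fun i _ => by rw [hχ0 i x t (hx i), zero_mul]
    · have h : ∀ x, ρ x t = ∑ i, c * (s t)⁻¹ ^ d * (χ i x t * 1) := by
        intro x
        have h := hsplit t ht x (fun _ => 1)
        rwa [mul_one] at h
      simp only [h]
      rw [hslice t ht (fun _ _ => 1) (fun _ => continuous_const)]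
      refine Eq.trans ?_ hsum
      refine Finset.sum_congr rfl fun i _ => ?_
      rw [setIntegral_const, smul_eq_mul, mul_one, Measure.real]
  · rw [lintegral_prod_symm _ (by fun_prop)]
    have hbound : ∀ t ∈ Ioo α β, ∫⁻ x, ENNReal.ofReal (ρ x t * ‖v x t‖ ^ 2) ≤
        ENNReal.ofReal (∑ i, c * (volume (A i)).toReal * B i) := by
      intro t ht
      have hst := hpos t ht
      have hle : ∀ x, ρ x t * ‖v x t‖ ^ 2 ≤ ∑ i, c * (s t)⁻¹ ^ d * (χ i x t * B i) := by
        intro x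
        rw [hsplit t ht x (fun u => ‖u‖ ^ 2)]
        refine Finset.sum_le_sum fun i _ => ?_
        refine mul_le_mul_of_nonneg_left ?_ (by positivity)
        by_cases hx : (s t)⁻¹ • (x - a i t) ∈ A i
        · rw [hχ1 i x t hx, one_mul, one_mul]
          have := hB t ht i _ hx
          rwa [smul_smul, ← div_eq_mul_inv] at this
        · rw [hχ0 i x t hx, zero_mul, zero_mul]
      have hint : Integrable (fun x => ∑ i, c * (s t)⁻¹ ^ d * (χ i x t * B i)) :=
        integrable_finsetSum _ fun i _ => (hχint i t ht (fun _ => B i) continuous_const).const_mul _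
      calc ∫⁻ x, ENNReal.ofReal (ρ x t * ‖v x t‖ ^ 2)
          ≤ ∫⁻ x, ENNReal.ofReal (∑ i, c * (s t)⁻¹ ^ d * (χ i x t * B i)) :=
            lintegral_mono fun x => ENNReal.ofReal_le_ofReal (hle x)
        _ = ENNReal.ofReal (∫ x, ∑ i, c * (s t)⁻¹ ^ d * (χ i x t * B i)) := by
            rw [ofReal_integral_eq_lintegral_ofReal hint (Filter.Eventually.of_forall fun x =>
              (mul_nonneg (hρnn x t) (sq_nonneg _)).trans (hle x))]
        _ = _ := by
            rw [hslice t ht (fun i _ => B i) (fun _ => continuous_const)]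
            congr 1
            refine Finset.sum_congr rfl fun i _ => ?_
            simp [Measure.real, mul_assoc]
    calc ∫⁻ t in Icc α β, ∫⁻ x, ENNReal.ofReal (ρ x t * ‖v x t‖ ^ 2)
        ≤ ∫⁻ t in Icc α β, ENNReal.ofReal (∑ i, c * (volume (A i)).toReal * B i) :=
          lintegral_mono_ae (by filter_upwards [haeIoo] with t ht using hbound t ht)
      _ = _ := by
          rw [setLIntegral_const, Real.volume_Icc, mul_comm, ENNReal.ofReal_mul (by linarith)]
  · intro q hq hqc
    have hDc : Continuous (fderiv ℝ (fun z : Eu d × ℝ => q z.1 z.2)) :=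
      hq.continuous_fderiv (by simp)
    have haux := fun i => phase_aux (A i) (hA i) (hb i) α β hαβ.le (a i) (a' i) s s' (ha i) hs
      (ha' i) hs' q hq
    have heq : ∀ t ∈ Ioo α β, ∫ x, ρ x t *
        (deriv (fun s => q x s) t + ⟪v x t, gradient (fun y => q y t) x⟫) =
        ∑ i, c * ∫ y in A i, fderiv ℝ (fun z : Eu d × ℝ => q z.1 z.2)
          (a i t + s t • y, t) (a' i t + s' t • y, 1) := by
      intro t ht
      have hst := hpos t ht
      have e : ∀ x, ρ x t * (deriv (fun s => q x s) t + ⟪v x t, gradient (fun y => q y t) x⟫) =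
          ∑ i, c * (s t)⁻¹ ^ d * (χ i x t * fderiv ℝ (fun z : Eu d × ℝ => q z.1 z.2)
            (x, t) (w i x t, 1)) := by
        intro x
        rw [split_fderiv q hq]
        exact hsplit t ht x (fun u => fderiv ℝ (fun z : Eu d × ℝ => q z.1 z.2) (x, t) (u, 1))
      simp only [e]
      rw [hslice t ht (fun i x => fderiv ℝ (fun z : Eu d × ℝ => q z.1 z.2) (x, t) (w i x t, 1))
        (fun i => (hDc.comp (by fun_prop)).clm_apply (by simp only [hw]; fun_prop))]
      refine Finset.sum_congr rfl fun i _ => ?_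
      congr 1
      refine integral_congr_ae (Filter.Eventually.of_forall fun y => ?_)
      simp only [hw, add_sub_cancel_left, smul_smul, div_mul_cancel₀ _ hst.ne']
    have hsumint : IntegrableOn (fun t => ∑ i, c * ∫ y in A i,
        fderiv ℝ (fun z : Eu d × ℝ => q z.1 z.2)
          (a i t + s t • y, t) (a' i t + s' t • y, 1)) (Icc α β) :=
      integrable_finsetSum _ fun i _ => (haux i).1.const_mul c
    have hcongr : (fun t => ∑ i, c * ∫ y in A i, fderiv ℝ (fun z : Eu d × ℝ => q z.1 z.2)
          (a i t + s t • y, t) (a' i t + s' t • y, 1)) =ᵐ[volume.restrict (Icc α β)]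
        fun t => ∫ x, ρ x t *
        (deriv (fun s => q x s) t + ⟪v x t, gradient (fun y => q y t) x⟫) := by
      filter_upwards [haeIoo] with t ht using (heq t ht).symm
    refine ⟨hsumint.congr hcongr, ?_⟩
    rw [← integral_congr_ae hcongr, integral_finsetSum _ fun i _ => (haux i).1.const_mul c,
      ← Finset.sum_sub_distrib]
    refine Finset.sum_congr rfl fun i _ => ?_
    rw [integral_const_mul, (haux i).2, mul_sub]

lemma PhaseOK.congr {d : ℕ} {α β : ℝ} {l₀ l₁ m₀ m₁ : (Eu d → ℝ) → ℝ} {C D : ℝ}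
    (h : PhaseOK d α β l₀ l₁ C) (h0 : ∀ f, Continuous f → l₀ f = m₀ f)
    (h1 : ∀ f, Continuous f → l₁ f = m₁ f) (hC : C ≤ D) : PhaseOK d α β m₀ m₁ D := by
  obtain ⟨ρ, v, hρ, hv, hnn, hs, ha, hq⟩ := h
  refine ⟨ρ, v, hρ, hv, hnn, hs, ha.trans (ENNReal.ofReal_le_ofReal hC), fun q hq1 hq2 => ?_⟩
  have hc : ∀ t, Continuous (fun x => q x t) := fun t =>
    hq1.continuous.comp (by fun_prop : Continuous (fun x : Eu d => ((x, t) : Eu d × ℝ)))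
  rw [← h0 _ (hc α), ← h1 _ (hc β)]
  exact hq q hq1 hq2

lemma PhaseOK.trans {d : ℕ} {α β γ : ℝ} {l₀ l₁ l₂ : (Eu d → ℝ) → ℝ} {C D : ℝ}
    (hαβ : α ≤ β) (hβγ : β ≤ γ) (hC : 0 ≤ C) (hD : 0 ≤ D)
    (h : PhaseOK d α β l₀ l₁ C) (h' : PhaseOK d β γ l₁ l₂ D) :
    PhaseOK d α γ l₀ l₂ (C + D) := by
  obtain ⟨ρ, v, hρ, hv, hnn, hs, ha, hq⟩ := h
  obtain ⟨ρ', v', hρ', hv', hnn', hs', ha', hq'⟩ := h'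
  have hae1 : ∀ᵐ t ∂(volume.restrict (Icc α β)), t < β := by
    rw [← restrict_Ico_eq_restrict_Icc]
    filter_upwards [ae_restrict_mem measurableSet_Ico] with t ht using ht.2
  have hae2 : ∀ᵐ t ∂(volume.restrict (Icc β γ)), ¬ t < β := by
    filter_upwards [ae_restrict_mem measurableSet_Icc] with t ht using not_lt.2 ht.1
  have hres : volume.restrict (Icc α γ) =
      volume.restrict (Icc α β) + volume.restrict (Icc β γ) := by
    rw [← restrict_Ioc_eq_restrict_Icc (a := β), ← Measure.restrict_union _ measurableSet_Ioc,
      Icc_union_Ioc_eq_Icc hαβ hβγ]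
    rw [Set.disjoint_left]
    intro t ht ht'
    exact absurd ht.2 (not_le.2 ht'.1)
  have hmeas : MeasurableSet {q : Eu d × ℝ | q.2 < β} := measurable_snd measurableSet_Iio
  refine ⟨fun x t => if t < β then ρ x t else ρ' x t, fun x t => if t < β then v x t else v' x t,
    Measurable.ite hmeas hρ hρ', Measurable.ite hmeas hv hv', ?_, ?_, ?_, ?_⟩
  · intro x t
    beta_reduce
    split_ifs
    exacts [hnn x t, hnn' x t]
  · rw [hres, ae_add_measure_iff]
    constructor
    · filter_upwards [hae1, hs] with t ht h
      simpa only [if_pos ht] using h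
    · filter_upwards [hae2, hs'] with t ht h
      simpa only [if_neg ht] using h
  · rw [hres, Measure.prod_add, lintegral_add_measure, ENNReal.ofReal_add hC hD]
    refine add_le_add (le_trans (le_of_eq ?_) ha) (le_trans (le_of_eq ?_) ha')
    · refine lintegral_congr_ae ?_
      have := Measure.quasiMeasurePreserving_snd (μ := (volume : Measure (Eu d)))
        (ν := volume.restrict (Icc α β)) |>.ae hae1
      filter_upwards [this] with q hq
      simp only [if_pos hq]
    · refine lintegral_congr_ae ?_
      have := Measure.quasiMeasurePreserving_snd (μ := (volume : Measure (Eu d)))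
        (ν := volume.restrict (Icc β γ)) |>.ae hae2
      filter_upwards [this] with q hq
      simp only [if_neg hq]
  · intro q hq1 hq2
    obtain ⟨i1, e1⟩ := hq q hq1 hq2
    obtain ⟨i2, e2⟩ := hq' q hq1 hq2
    set F : ℝ → ℝ := fun t => ∫ x, (if t < β then ρ x t else ρ' x t) *
        (deriv (fun s => q x s) t + ⟪if t < β then v x t else v' x t,
          gradient (fun y => q y t) x⟫) with hF
    have c1 : (fun t => ∫ x, ρ x t *
        (deriv (fun s => q x s) t + ⟪v x t, gradient (fun y => q y t) x⟫))
        =ᵐ[volume.restrict (Icc α β)] F := by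
      filter_upwards [hae1] with t ht
      simp only [hF, if_pos ht]
    have c2 : (fun t => ∫ x, ρ' x t *
        (deriv (fun s => q x s) t + ⟪v' x t, gradient (fun y => q y t) x⟫))
        =ᵐ[volume.restrict (Icc β γ)] F := by
      filter_upwards [hae2] with t ht
      simp only [hF, if_neg ht]
    have j1 : Integrable F (volume.restrict (Icc α β)) := Integrable.congr i1 c1
    have j2 : Integrable F (volume.restrict (Icc β γ)) := Integrable.congr i2 c2
    constructor
    · rw [IntegrableOn, hres]
      exact j1.add_measure j2
    · rw [hres, integral_add_measure j1 j2, ← integral_congr_ae c1, ← integral_congr_ae c2, e1, e2]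
      ring

lemma PhaseOK.admissible {d : ℕ} {Ω₀ Ω₁ : Set (Eu d)} {C : ℝ}
    (h : PhaseOK d 0 1 (fun f => (volume Ω₀).toReal⁻¹ * ∫ x in Ω₀, f x)
      (fun f => (volume Ω₁).toReal⁻¹ * ∫ x in Ω₁, f x) C) :
    sInf { A | ∃ ρ v, UniformAdmissible Ω₀ Ω₁ ρ v ∧
        A = ∫⁻ q, ENNReal.ofReal (ρ q.1 q.2 * ‖v q.1 q.2‖ ^ 2) ∂(spaceTime d) } ≤
      ENNReal.ofReal C := by
  obtain ⟨ρ, v, hρ, hv, hnn, hs, ha, hq⟩ := h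
  refine le_trans (sInf_le ⟨ρ, v, ⟨hρ, hv, hnn, hs, ?_, fun q h1 h2 => (hq q h1 h2).2⟩, rfl⟩) ha
  exact lt_of_le_of_lt ha ENNReal.ofReal_lt_top

lemma monotone_inner {d : ℕ} (x x' y y' : Eu d)
    (h : ‖x - y‖ ^ 2 + ‖x' - y'‖ ^ 2 ≤ ‖x - y'‖ ^ 2 + ‖x' - y‖ ^ 2) :
    0 ≤ ⟪x - x', y - y'⟫ := by
  simp only [norm_sub_sq_real] at h
  simp only [inner_sub_left, inner_sub_right]
  linarith

lemma noncollide {d : ℕ} (x x' y y' : Eu d) (D lam : ℝ) (h0 : 0 < lam) (h1 : lam < 1) (hD : 0 < D)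
    (hin : 0 ≤ ⟪x - x', y - y'⟫) (hor : D ≤ ‖x - x'‖ ∨ D ≤ ‖y - y'‖) :
    lam * (1 - lam) * D ≤ ‖(x + lam • (y - x)) - (x' + lam • (y' - x'))‖ := by
  have e : (x + lam • (y - x)) - (x' + lam • (y' - x')) =
      (1 - lam) • (x - x') + lam • (y - y') := by module
  rw [e]
  refine le_of_sq_le_sq ?_ (norm_nonneg _)
  rw [norm_add_sq_real, norm_smul, norm_smul, inner_smul_left, inner_smul_right,
    Real.norm_of_nonneg h0.le, Real.norm_of_nonneg (sub_nonneg.2 h1.le)]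
  simp only [conj_trivial]
  have h2 : 0 ≤ 2 * ((1 - lam) * (lam * ⟪x - x', y - y'⟫)) := by
    have : 0 ≤ 1 - lam := by linarith
    positivity
  have hl : 0 < 1 - lam := by linarith
  rcases hor with h | h
  · have h3 : lam * (1 - lam) * D ≤ (1 - lam) * ‖x - x'‖ := by
      have : lam * (1 - lam) * D ≤ 1 * (1 - lam) * D := by gcongr
      have : (1 - lam) * D ≤ (1 - lam) * ‖x - x'‖ := by gcongr
      linarith
    have h4 : (lam * (1 - lam) * D) ^ 2 ≤ ((1 - lam) * ‖x - x'‖) ^ 2 := by gcongr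
    nlinarith [sq_nonneg (lam * ‖y - y'‖)]
  · have h3 : lam * (1 - lam) * D ≤ lam * ‖y - y'‖ := by
      have : lam * (1 - lam) * D ≤ lam * 1 * D := by gcongr; linarith
      have : lam * D ≤ lam * ‖y - y'‖ := by gcongr
      linarith
    have h4 : (lam * (1 - lam) * D) ^ 2 ≤ (lam * ‖y - y'‖) ^ 2 := by gcongr
    nlinarith [sq_nonneg ((1 - lam) * ‖x - x'‖)]

lemma ball_phase {d : ℕ} (hd : 0 < d) {ι κ : Type} [Fintype ι] [Fintype κ] [DecidableEq ι]
    [DecidableEq κ] (x : ι → Eu d) (y : κ → Eu d) (hx : Function.Injective x)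
    (hy : Function.Injective y) (m : ι → ℝ) (n : κ → ℝ) (p : ι × κ → ℝ) (hp : ∀ a, 0 ≤ p a)
    (h1 : ∀ k, ∑ l, p (k, l) = m k) (h2 : ∀ l, ∑ k, p (k, l) = n l) (hm : ∑ k, m k = 1)
    (hmono : ∀ k l k' l', 0 < p (k, l) → 0 < p (k', l') →
      ‖x k - y l‖ ^ 2 + ‖x k' - y l'‖ ^ 2 ≤ ‖x k - y l'‖ ^ 2 + ‖x k' - y l‖ ^ 2)
    (α β : ℝ) (hαβ : α < β) (δ : ℝ) (hδ : 0 < δ) :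
    PhaseOK d α β (fun f => ∑ k, m k * f (x k)) (fun f => ∑ l, n l * f (y l))
      ((β - α)⁻¹ * ∑ k, ∑ l, p (k, l) * ‖x k - y l‖ ^ 2 + δ) := by
  classical
  have : Nonempty (Fin d) := ⟨⟨0, hd⟩⟩
  set L := β - α with hL
  have hL0 : 0 < L := sub_pos.2 hαβ
  set M := ∑ k, ∑ l, p (k, l) * ‖x k - y l‖ with hM
  have hM0 : 0 ≤ M := Finset.sum_nonneg fun k _ => Finset.sum_nonneg fun l _ =>
    mul_nonneg (hp _) (norm_nonneg _)
  have hpsum : ∑ a, p a = 1 := by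
    rw [Fintype.sum_prod_type]; simp only [h1, hm]
  have hp1 : ∀ a, p a ≤ 1 := fun a => hpsum ▸ Finset.single_le_sum (fun b _ => hp b) (Finset.mem_univ a)
  -- choice of the small scale
  have hev : ∀ c : ℝ, 0 < c → ∀ᶠ k in nhdsWithin (0:ℝ) (Ioi 0), k ≤ c := fun c hc => by
    filter_upwards [Ioc_mem_nhdsGT hc] with k hk using hk.2
  have hx' : ∀ᶠ k in nhdsWithin (0:ℝ) (Ioi 0), ∀ i j, i ≠ j → k ≤ ‖x i - x j‖ / 2 := by
    refine Filter.eventually_all.2 fun i => Filter.eventually_all.2 fun j => ?_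
    by_cases hij : i = j
    · simp [hij]
    · have : 0 < ‖x i - x j‖ / 2 := by
        have := norm_pos_iff.2 (sub_ne_zero.2 (hx.ne hij)); positivity
      filter_upwards [hev _ this] with k hk _ using hk
  have hy' : ∀ᶠ k in nhdsWithin (0:ℝ) (Ioi 0), ∀ i j, i ≠ j → k ≤ ‖y i - y j‖ / 2 := by
    refine Filter.eventually_all.2 fun i => Filter.eventually_all.2 fun j => ?_
    by_cases hij : i = j
    · simp [hij]
    · have : 0 < ‖y i - y j‖ / 2 := by
        have := norm_pos_iff.2 (sub_ne_zero.2 (hy.ne hij)); positivity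
      filter_upwards [hev _ this] with k hk _ using hk
  obtain ⟨σ, hσ0, hσx, hσy, hσ1, hσδ⟩ :=
    ((eventually_mem_nhdsWithin (a := (0:ℝ)) (s := Ioi 0)).and (hx'.and (hy'.and
      ((hev 1 one_pos).and (hev (δ * L / (2 * M + 1)) (by positivity)))))).exists
  replace hσ0 : 0 < σ := hσ0
  set r : ι × κ → ℝ := fun a => p a ^ ((d:ℝ)⁻¹) with hr
  have hr0 : ∀ a, 0 ≤ r a := fun a => Real.rpow_nonneg (hp a) _
  have hr1 : ∀ a, r a ≤ 1 := fun a => Real.rpow_le_one (hp a) (hp1 a) (by positivity)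
  have hrd : ∀ a, r a ^ d = p a := fun a => Real.rpow_inv_natCast_pow (hp a) hd.ne'
  have hrp : ∀ a, 0 < r a → 0 < p a := fun a h => by rw [← hrd]; positivity
  set V := (volume (Metric.ball (0 : Eu d) 1)).toReal with hV
  have hV0 : 0 < V := ENNReal.toReal_pos (Metric.measure_ball_pos _ _ one_pos).ne'
    Metric.isBounded_ball.measure_lt_top.ne
  have hvol : ∀ a, (volume (Metric.ball (0 : Eu d) (r a))).toReal = p a * V := by
    intro a
    rw [Measure.addHaar_ball _ _ (hr0 a), ENNReal.toReal_mul, finrank_euclideanSpace,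
      Fintype.card_fin, hrd, ENNReal.toReal_ofReal (hp a)]
  have hcv : ∀ a, V⁻¹ * (volume (Metric.ball (0 : Eu d) (r a))).toReal = p a := by
    intro a; rw [hvol]; field_simp
  have hlam : ∀ t ∈ Ioo α β, 0 < (t - α) / L ∧ (t - α) / L < 1 := by
    intro t ht
    refine ⟨div_pos (by linarith [ht.1]) hL0, (div_lt_one hL0).2 (by linarith [ht.2])⟩
  have hlamd : ∀ t : ℝ, HasDerivAt (fun t => (t - α) / L) (1 / L) t := fun t =>
    ((hasDerivAt_id t).sub_const α).div_const L
  have key := phase_main (fun a : ι × κ => Metric.ball (0 : Eu d) (r a))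
    (fun a => measurableSet_ball) (fun a => Metric.isBounded_ball) V⁻¹ (by positivity)
    (by simp only [hcv, hpsum]) α β hαβ
    (fun a t => x a.1 + ((t - α) / L) • (y a.2 - x a.1))
    (fun a t => (1 / L) • (y a.2 - x a.1))
    (fun t => σ * ((t - α) / L * (1 - (t - α) / L)))
    (fun t => σ * ((1 / L) * (1 - (t - α) / L) + (t - α) / L * (0 - 1 / L)))
    (fun a t => ((hlamd t).smul_const _).const_add _)
    (fun t => ((hlamd t).mul ((hasDerivAt_const t 1).sub (hlamd t))).const_mul σ)
    (fun a => continuous_const) (by fun_prop)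
    (fun t ht => by
      obtain ⟨u1, u2⟩ := hlam t ht
      have : 0 < 1 - (t - α) / L := by linarith
      positivity)
    (by
      intro t ht a b z ha hb
      obtain ⟨u1, u2⟩ := hlam t ht
      set lam := (t - α) / L with hlamdef
      have hs0 : 0 < σ * (lam * (1 - lam)) := by
        have : 0 < 1 - lam := by linarith
        positivity
      have hnear : ∀ (a : ι × κ) (c : Eu d), (σ * (lam * (1 - lam)))⁻¹ • (z - c) ∈
          Metric.ball (0 : Eu d) (r a) → ‖z - c‖ < σ * (lam * (1 - lam)) := by
        intro a c h
        rw [mem_ball_zero_iff, norm_smul, norm_inv, Real.norm_of_nonneg hs0.le,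
          inv_mul_lt_iff₀ hs0] at h
        have := mul_le_mul_of_nonneg_left (hr1 a) hs0.le
        linarith
      have hposr : ∀ (a : ι × κ) (c : Eu d), c ∈ Metric.ball (0 : Eu d) (r a) → 0 < p a := by
        intro a c h
        exact hrp a (lt_of_le_of_lt (norm_nonneg _) (mem_ball_zero_iff.1 h))
      have na := hnear a _ ha
      have nb := hnear b _ hb
      have pa := hposr a _ ha
      have pb := hposr b _ hb
      by_contra hab
      have hor : 2 * σ ≤ ‖x a.1 - x b.1‖ ∨ 2 * σ ≤ ‖y a.2 - y b.2‖ := by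
        by_cases h : a.1 = b.1
        · right
          have := hσy a.2 b.2 (fun h' => hab (Prod.ext h h'))
          linarith
        · left
          have := hσx a.1 b.1 h
          linarith
      have hnc := noncollide (x a.1) (x b.1) (y a.2) (y b.2) (2 * σ) lam u1 u2 (by positivity)
        (monotone_inner _ _ _ _ (hmono a.1 a.2 b.1 b.2 pa pb)) hor
      have htri := norm_sub_le (z - (x b.1 + lam • (y b.2 - x b.1)))
        (z - (x a.1 + lam • (y a.2 - x a.1)))
      rw [sub_sub_sub_cancel_left] at htri
      linarith)
    (fun a => ((‖x a.1 - y a.2‖ + σ) / L) ^ 2)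
    (by
      intro t ht a z hz
      obtain ⟨u1, u2⟩ := hlam t ht
      set lam := (t - α) / L with hlamdef
      have hz1 : ‖z‖ ≤ 1 := (mem_ball_zero_iff.1 hz).le.trans (hr1 a)
      gcongr
      refine (norm_add_le _ _).trans ?_
      rw [norm_smul, norm_smul, norm_sub_rev, add_div, Real.norm_of_nonneg (by positivity)]
      have e : σ * (1 / L * (1 - lam) + lam * (0 - 1 / L)) = σ / L * (1 - 2 * lam) := by
        field_simp; ring
      have e2 : |1 - 2 * lam| ≤ 1 := by rw [abs_le]; constructor <;> linarith
      rw [e, Real.norm_eq_abs, abs_mul, abs_of_pos (by positivity : 0 < σ / L)]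
      have e3 : σ / L * |1 - 2 * lam| * ‖z‖ ≤ σ / L * 1 * 1 := by gcongr
      have e4 : 1 / L * ‖x a.1 - y a.2‖ = ‖x a.1 - y a.2‖ / L := by ring
      linarith)
  have hint : ∀ (a : ι × κ) (c : ℝ), V⁻¹ * ∫ _ in Metric.ball (0 : Eu d) (r a), c = p a * c := by
    intro a c
    rw [setIntegral_const, smul_eq_mul, Measure.real, ← mul_assoc, hcv]
  refine key.congr ?_ ?_ ?_
  · intro f _
    simp only [sub_self, zero_div, zero_smul, add_zero, zero_mul, mul_zero, hint]
    rw [Fintype.sum_prod_type]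
    simp only [← Finset.sum_mul, h1]
  · intro f _
    have hLL : (β - α) / L = 1 := div_self hL0.ne'
    simp only [hLL, sub_self, one_smul, mul_zero, zero_smul, add_zero, add_sub_cancel, hint]
    rw [Fintype.sum_prod_type_right]
    simp only [← Finset.sum_mul, h2]
  · simp only [hcv]
    rw [Fintype.sum_prod_type]
    have e : ∀ k l, p (k, l) * ((‖x k - y l‖ + σ) / L) ^ 2 =
        (L⁻¹) ^ 2 * (p (k, l) * ‖x k - y l‖ ^ 2) + (L⁻¹) ^ 2 * (2 * σ) * (p (k, l) * ‖x k - y l‖)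
          + (L⁻¹) ^ 2 * σ ^ 2 * p (k, l) := by
      intro k l; field_simp; ring
    simp only [e, Finset.sum_add_distrib, ← Finset.mul_sum, h1, hm, ← hM]
    set S := ∑ k, ∑ l, p (k, l) * ‖x k - y l‖ ^ 2
    have e5 : (β - α) * ((L⁻¹) ^ 2 * S + (L⁻¹) ^ 2 * (2 * σ) * M + (L⁻¹) ^ 2 * σ ^ 2 * 1) =
        L⁻¹ * S + L⁻¹ * (σ * (2 * M + σ)) := by
      rw [← hL]; field_simp; ring
    rw [e5]
    have e6 : σ * (2 * M + σ) ≤ δ * L := by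
      rw [le_div_iff₀ (by positivity)] at hσδ
      have : σ * (2 * M + σ) ≤ σ * (2 * M + 1) := by gcongr
      linarith
    have e7 : L⁻¹ * (σ * (2 * M + σ)) ≤ δ := by
      rw [inv_mul_le_iff₀ hL0]; linarith
    linarith

/-- Contraction or expansion of all cells. -/
lemma cell_phase {d : ℕ} {Ω : Set (Eu d)} (hm : MeasurableSet Ω) (hb : Bornology.IsBounded Ω)
    (hp : 0 < volume Ω) {ι : Type} [Fintype ι] [DecidableEq ι] {Q : ι → Set (Eu d)} {x : ι → Eu d}
    {η : ℝ} (hη : 0 ≤ η) (hQm : ∀ k, MeasurableSet (Q k))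
    (hQd : Pairwise (fun i j => Disjoint (Q i) (Q j))) (hQv : ∀ k, Convex ℝ (Q k))
    (hxQ : ∀ k, x k ∈ Q k) (hQη : ∀ k, ∀ y ∈ Q k, ‖y - x k‖ ≤ η) (hQc : Ω ⊆ ⋃ k, Q k)
    (α β u w : ℝ) (hαβ : α < β) (h01 : ∀ t ∈ Ioo α β, 0 < u + w * t ∧ u + w * t < 1) :
    ∃ l : ℝ → (Eu d → ℝ) → ℝ,
      PhaseOK d α β (l (u + w * α)) (l (u + w * β)) ((β - α) * (w * η) ^ 2) ∧
      (∀ f, Continuous f → l 1 f = (volume Ω).toReal⁻¹ * ∫ x in Ω, f x) ∧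
      (∀ f, l 0 f = ∑ k, (((volume Ω)⁻¹ • volume.restrict Ω) (Q k)).toReal * f (x k)) := by
  have hprob := unif_prob hb hp
  set c := (volume Ω).toReal⁻¹ with hc
  have hc0 : 0 < c := inv_pos.2 (ENNReal.toReal_pos hp.ne' hb.measure_lt_top.ne)
  set A : ι → Set (Eu d) := fun k => {y | y + x k ∈ Ω ∩ Q k} with hA
  have hAm : ∀ k, MeasurableSet (A k) := fun k => by
    have : Measurable (fun y : Eu d => y + x k) := by fun_prop
    exact this (hm.inter (hQm k))
  have hAη : ∀ k, ∀ y ∈ A k, ‖y‖ ≤ η := fun k y hy => by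
    have := hQη k _ hy.2
    rwa [add_sub_cancel_right] at this
  have hAb : ∀ k, Bornology.IsBounded (A k) := fun k =>
    (Metric.isBounded_closedBall (x := (0 : Eu d)) (r := η)).subset fun y hy => by
      rw [mem_closedBall_zero_iff]; exact hAη k y hy
  have hvA : ∀ k, c * (volume (A k)).toReal =
      (((volume Ω)⁻¹ • volume.restrict Ω) (Q k)).toReal := by
    intro k
    have e : volume (A k) = volume (Ω ∩ Q k) :=
      measure_preimage_add_right volume (x k) (Ω ∩ Q k)
    rw [e, Measure.smul_apply, Measure.restrict_apply (hQm k), smul_eq_mul, ENNReal.toReal_mul,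
      ENNReal.toReal_inv, inter_comm]
  have hsum : ∑ k, c * (volume (A k)).toReal = 1 := by
    simp only [hvA]
    exact sum_cells (unif_compl hm) hQm hQd hQc
  have key := phase_main A hAm hAb c hc0 hsum α β hαβ (fun k _ => x k) (fun _ _ => 0)
    (fun t => u + w * t) (fun _ => w) (fun k t => hasDerivAt_const t (x k))
    (fun t => by simpa using ((hasDerivAt_id t).const_mul w).const_add u)
    (fun _ => continuous_const) continuous_const (fun t ht => (h01 t ht).1)
    (by
      intro t ht i j z hi hj
      obtain ⟨h0, h1⟩ := h01 t ht
      set s := u + w * t with hs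
      have hin : ∀ k, s⁻¹ • (z - x k) ∈ A k → z ∈ Q k := by
        intro k hk
        have h := hQv k (hxQ k) hk.2 (sub_nonneg.2 h1.le) h0.le (by ring)
        have e : (1 - s) • x k + s • (s⁻¹ • (z - x k) + x k) = z := by
          rw [smul_add, smul_smul, mul_inv_cancel₀ h0.ne']; module
        rwa [e] at h
      by_contra hij
      exact Set.disjoint_left.1 (hQd hij) (hin i hi) (hin j hj))
    (fun _ => (w * η) ^ 2)
    (by
      intro t ht k y hy
      rw [zero_add, norm_smul, mul_pow, mul_pow, Real.norm_eq_abs, sq_abs]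
      have := hAη k y hy
      gcongr)
  refine ⟨fun s f => ∑ k, c * ∫ y in A k, f (x k + s • y), ?_, ?_, ?_⟩
  · refine key.congr (fun _ _ => rfl) (fun _ _ => rfl) (le_of_eq ?_)
    rw [← Finset.sum_mul, hsum, one_mul]
  · intro f hf
    beta_reduce
    rw [← Finset.mul_sum]
    congr 1
    have e : ∀ k, ∫ y in A k, f (x k + (1:ℝ) • y) = ∫ y in Ω ∩ Q k, f y := by
      intro k
      rw [← cov_int (A k) (hAm k) (x k) 1 one_pos, ← integral_indicator (hm.inter (hQm k))]
      simp only [inv_one, one_pow, one_mul, one_smul]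
      refine integral_congr_ae (Filter.Eventually.of_forall fun z => ?_)
      have hz : z - x k ∈ A k ↔ z ∈ Ω ∩ Q k := by
        change z - x k + x k ∈ Ω ∩ Q k ↔ _
        rw [sub_add_cancel]
      beta_reduce
      by_cases h : z ∈ Ω ∩ Q k
      · rw [indicator_of_mem h, indicator_of_mem (hz.2 h), one_mul]
      · rw [indicator_of_notMem h, indicator_of_notMem (mt hz.1 h), zero_mul]
    simp only [e]
    have hfi : IntegrableOn f Ω :=
      (hf.continuousOn.integrableOn_compact hb.isCompact_closure).mono_set subset_closure
    rw [← integral_iUnion_fintype (fun k => hm.inter (hQm k))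
      (fun i j hij => (hQd hij).mono inter_subset_right inter_subset_right)
      (fun k => hfi.mono_set inter_subset_left), ← inter_iUnion, inter_eq_self_of_subset_left hQc]
  · intro f
    refine Finset.sum_congr rfl fun k _ => ?_
    simp only [zero_smul, add_zero]
    rw [setIntegral_const, smul_eq_mul, Measure.real, ← mul_assoc, hvA]

lemma upper_const {d : ℕ} {Ω : Set (Eu d)} (hm : MeasurableSet Ω) (hb : Bornology.IsBounded Ω)
    (hp : 0 < volume Ω) :
    sInf { A | ∃ ρ v, UniformAdmissible Ω Ω ρ v ∧
        A = ∫⁻ q, ENNReal.ofReal (ρ q.1 q.2 * ‖v q.1 q.2‖ ^ 2) ∂(spaceTime d) } = 0 := by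
  have hv : 0 < (volume Ω).toReal := ENNReal.toReal_pos hp.ne' hb.measure_lt_top.ne
  have key := phase_main (fun _ : Unit => Ω) (fun _ => hm) (fun _ => hb) (volume Ω).toReal⁻¹
    (inv_pos.2 hv) (by simp [hv.ne']) 0 1 one_pos (fun _ _ => 0) (fun _ _ => 0) (fun _ => 1)
    (fun _ => 0) (fun _ t => hasDerivAt_const t 0) (fun t => hasDerivAt_const t 1)
    (fun _ => continuous_const) continuous_const (fun _ _ => one_pos) (fun _ _ _ _ _ _ _ => rfl)
    (fun _ => 0) (fun _ _ _ _ _ => by simp)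
  have k2 := PhaseOK.admissible (Ω₀ := Ω) (Ω₁ := Ω) (C := 0)
    (key.congr (fun f _ => by simp) (fun f _ => by simp) (by simp))
  simpa using k2

lemma upper_bound {d : ℕ} (hd : 0 < d) {Ω₀ Ω₁ : Set (Eu d)}
    (h₀meas : MeasurableSet Ω₀) (h₁meas : MeasurableSet Ω₁)
    (h₀bdd : Bornology.IsBounded Ω₀) (h₁bdd : Bornology.IsBounded Ω₁)
    (h₀pos : 0 < volume Ω₀) (h₁pos : 0 < volume Ω₁) :
    sInf { A | ∃ ρ v, UniformAdmissible Ω₀ Ω₁ ρ v ∧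
        A = ∫⁻ q, ENNReal.ofReal (ρ q.1 q.2 * ‖v q.1 q.2‖ ^ 2) ∂(spaceTime d) } ≤
      W2sq ((volume Ω₀)⁻¹ • volume.restrict Ω₀) ((volume Ω₁)⁻¹ • volume.restrict Ω₁) := by
  refine le_sInf ?_
  rintro C ⟨π, hπ1, hπ2, hC⟩
  have hprob0 := unif_prob h₀bdd h₀pos
  have hprob1 := unif_prob h₁bdd h₁pos
  by_cases hCtop : C = ⊤
  · rw [hCtop]; exact le_top
  obtain ⟨R₀, hR₀⟩ := h₀bdd.exists_norm_le
  obtain ⟨R₁, hR₁⟩ := h₁bdd.exists_norm_le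
  set R := max 0 (max R₀ R₁) with hR
  have hR0 : 0 ≤ R := le_max_left _ _
  have hRa : ∀ x ∈ Ω₀, ‖x‖ ≤ R := fun x hx =>
    (hR₀ x hx).trans ((le_max_left _ _).trans (le_max_right _ _))
  have hRb : ∀ x ∈ Ω₁, ‖x‖ ≤ R := fun x hx =>
    (hR₁ x hx).trans ((le_max_right _ _).trans (le_max_right _ _))
  have main : ∀ η : ℝ, 0 < η → η ≤ 1 / 4 →
      sInf { A | ∃ ρ v, UniformAdmissible Ω₀ Ω₁ ρ v ∧
        A = ∫⁻ q, ENNReal.ofReal (ρ q.1 q.2 * ‖v q.1 q.2‖ ^ 2) ∂(spaceTime d) } ≤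
      C + ENNReal.ofReal ((3 + 4 * C.toReal + 2 * (8 * R + 4)) * η) := by
    intro η hη hη4
    obtain ⟨ι, _, _, Q, x, hQm, hQd, hQv, hxQ, hxΩ, hQη, hQc⟩ := exists_cells Ω₀ h₀bdd η hη
    obtain ⟨κ, _, _, Q', y, hQm', hQd', hQv', hyQ, hyΩ, hQη', hQc'⟩ := exists_cells Ω₁ h₁bdd η hη
    have hxinj : Function.Injective x := by
      intro i j hij
      by_contra hne
      exact Set.disjoint_left.1 (hQd hne) (hxQ i) (hij ▸ hxQ j)
    have hyinj : Function.Injective y := by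
      intro i j hij
      by_contra hne
      exact Set.disjoint_left.1 (hQd' hne) (hyQ i) (hij ▸ hyQ j)
    obtain ⟨p₀, hp0, hp1, hp2, hpc⟩ := plan_of_couple (unif_compl h₀meas) (unif_compl h₁meas)
      hQm hQm' hQd hQd' hQc hQc' π hπ1 hπ2 (fun k l => ‖x k - y l‖ ^ 2) ((8 * R + 4) * η)
      (by positivity) (fun _ _ => sq_nonneg _) (by
        rintro k l a ⟨ha, haΩ⟩ b ⟨hb, hbΩ⟩
        have h1 : ‖x k - y l‖ ≤ ‖a - b‖ + 2 * η := by
          have e : x k - y l = (a - b) - ((a - x k) - (b - y l)) := by abel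
          rw [e]
          have := norm_sub_le (a - b) ((a - x k) - (b - y l))
          have := norm_sub_le (a - x k) (b - y l)
          have := hQη k a ha
          have := hQη' l b hb
          linarith
        have h2 : ‖x k - y l‖ ^ 2 ≤ (‖a - b‖ + 2 * η) ^ 2 := by gcongr
        have h3 : ‖a - b‖ ≤ 2 * R := by
          have := norm_sub_le a b
          linarith [hRa a haΩ, hRb b hbΩ]
        nlinarith [mul_le_mul_of_nonneg_right h3 hη.le])
    have hm1 := sum_cells (unif_compl h₀meas) hQm hQd hQc
    obtain ⟨p, hq0, hq1, hq2, hqc, hmono⟩ := exists_monotone_plan _ _ hm1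
      (fun k l => ‖x k - y l‖ ^ 2) p₀ hp0 hp1 hp2
    set S := ∑ k, ∑ l, p (k, l) * ‖x k - y l‖ ^ 2 with hS
    have hS0 : 0 ≤ S := Finset.sum_nonneg fun k _ => Finset.sum_nonneg fun l _ =>
      mul_nonneg (hq0 _) (sq_nonneg _)
    have hSC : S ≤ C.toReal + (8 * R + 4) * η := by
      refine hqc.trans ?_
      rw [← hC] at hpc
      have e : C + ENNReal.ofReal ((8 * R + 4) * η) =
          ENNReal.ofReal (C.toReal + (8 * R + 4) * η) := by
        rw [ENNReal.ofReal_add ENNReal.toReal_nonneg (by positivity), ENNReal.ofReal_toReal hCtop]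
      rw [e] at hpc
      exact (ENNReal.ofReal_le_ofReal_iff (by positivity)).1 hpc
    obtain ⟨l₀, hl₀, hl₀1, hl₀0⟩ := cell_phase h₀meas h₀bdd h₀pos hη.le hQm hQd hQv hxQ hQη hQc
      0 η 1 (-η⁻¹) hη (by
        intro t ht
        have : t / η < 1 := (div_lt_one hη).2 ht.2
        have : 0 < t / η := div_pos ht.1 hη
        have e : 1 + -η⁻¹ * t = 1 - t / η := by ring
        rw [e]; constructor <;> linarith)
    obtain ⟨l₁, hl₁, hl₁1, hl₁0⟩ := cell_phase h₁meas h₁bdd h₁pos hη.le hQm' hQd' hQv' hyQ hQη' hQc'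
      (1 - η) 1 (1 - η⁻¹) η⁻¹ (by linarith) (by
        intro t ht
        have e : 1 - η⁻¹ + η⁻¹ * t = 1 - (1 - t) / η := by ring
        have : (1 - t) / η < 1 := (div_lt_one hη).2 (by linarith [ht.1])
        have : 0 < (1 - t) / η := div_pos (by linarith [ht.2]) hη
        rw [e]; constructor <;> linarith)
    have e1 : 1 + -η⁻¹ * 0 = 1 := by ring
    have e2 : 1 + -η⁻¹ * η = 0 := by field_simp; ring
    have e3 : 1 - η⁻¹ + η⁻¹ * (1 - η) = 0 := by field_simp; ring
    have e4 : 1 - η⁻¹ + η⁻¹ * 1 = 1 := by ring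
    rw [e1, e2] at hl₀
    rw [e3, e4] at hl₁
    have phA := hl₀.congr (D := η) hl₀1 (fun f _ => hl₀0 f) (by
      have : (-η⁻¹ * η) ^ 2 = 1 := by field_simp
      rw [this]; linarith)
    have phC := hl₁.congr (D := η) (fun f _ => hl₁0 f) hl₁1 (by
      have : (η⁻¹ * η) ^ 2 = 1 := by field_simp
      rw [this]; linarith)
    have phB := ball_phase hd x y hxinj hyinj _ _ p hq0 hq1 hq2 hm1 hmono η (1 - η) (by linarith)
      η hη
    have hLpos : 0 < 1 - η - η := by linarith
    have hB0 : 0 ≤ (1 - η - η)⁻¹ * S + η := by positivity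
    have ph := PhaseOK.trans (by linarith) (by linarith) (by linarith) hη.le
      (PhaseOK.trans hη.le (by linarith) hη.le hB0 phA phB) phC
    refine ph.admissible.trans ?_
    rw [← ENNReal.ofReal_toReal hCtop, ENNReal.toReal_ofReal ENNReal.toReal_nonneg,
      ← ENNReal.ofReal_add ENNReal.toReal_nonneg (by positivity)]
    refine ENNReal.ofReal_le_ofReal ?_
    set c := C.toReal with hc
    have hc0 : 0 ≤ c := ENNReal.toReal_nonneg
    have hinv : (1 - η - η)⁻¹ ≤ 1 + 4 * η := by
      rw [inv_le_iff_one_le_mul₀ hLpos]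
      nlinarith
    have hprod : (1 - η - η)⁻¹ * S ≤ (1 + 4 * η) * (c + (8 * R + 4) * η) := by gcongr
    have : (4 * η) * ((8 * R + 4) * η) ≤ 1 * ((8 * R + 4) * η) := by gcongr; linarith
    nlinarith
  refine ENNReal.le_of_forall_pos_le_add fun ε hε _ => ?_
  set B := 3 + 4 * C.toReal + 2 * (8 * R + 4) with hB
  have hB0 : 0 < B := by have : 0 ≤ C.toReal := ENNReal.toReal_nonneg; positivity
  have hε' : (0:ℝ) < ε := hε
  refine (main (min (1 / 4) (ε / B)) (lt_min (by norm_num) (by positivity))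
    (min_le_left _ _)).trans ?_
  gcongr
  rw [← ENNReal.ofReal_coe_nnreal]
  refine ENNReal.ofReal_le_ofReal ?_
  calc B * min (1 / 4) (ε / B) ≤ B * (ε / B) := by gcongr; exact min_le_right _ _
    _ = ε := by field_simp

/-- **Theorem 7.1.** For bounded measurable sets `Ω₀, Ω₁ ⊆ ℝ^d` of positive
volume, the infimum of the action over paths of uniform probability densities on bounded
sets (shape measures of arbitrary volume) transported weakly by `v`, connecting
`𝒰_{Ω₀}` to `𝒰_{Ω₁}`, equals the squared Wasserstein distance
`d_W(𝒰_{Ω₀} dx, 𝒰_{Ω₁} dx)²`. -/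
theorem shape_distance_no_volume_constraint_eq_wasserstein
    (d : ℕ) (Ω₀ Ω₁ : Set (EuclideanSpace ℝ (Fin d)))
    (h₀meas : MeasurableSet Ω₀) (h₁meas : MeasurableSet Ω₁)
    (h₀bdd : Bornology.IsBounded Ω₀) (h₁bdd : Bornology.IsBounded Ω₁)
    (h₀pos : 0 < volume Ω₀) (h₁pos : 0 < volume Ω₁) :
    sInf { A | ∃ ρ v, UniformAdmissible Ω₀ Ω₁ ρ v ∧
        A = ∫⁻ q, ENNReal.ofReal (ρ q.1 q.2 * ‖v q.1 q.2‖ ^ 2) ∂(spaceTime d) } =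
      W2sq ((volume Ω₀)⁻¹ • volume.restrict Ω₀) ((volume Ω₁)⁻¹ • volume.restrict Ω₁) := by
  refine le_antisymm ?_ ?_
  · rcases Nat.eq_zero_or_pos d with hd | hd
    · subst hd
      have h0 : Ω₀ = univ := Subsingleton.eq_univ_of_nonempty (nonempty_of_measure_ne_zero h₀pos.ne')
      have h1 : Ω₁ = univ := Subsingleton.eq_univ_of_nonempty (nonempty_of_measure_ne_zero h₁pos.ne')
      have h01 : Ω₁ = Ω₀ := h1.trans h0.symm
      subst h01
      rw [upper_const h₀meas h₀bdd h₀pos]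
      exact zero_le
    · exact upper_bound hd h₀meas h₁meas h₀bdd h₁bdd h₀pos h₁pos
  · refine le_sInf ?_
    rintro A ⟨ρ, v, hadm, rfl⟩
    exact lower_bound hadm h₀meas h₁meas h₀bdd h₁bdd h₀pos h₁pos
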